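/- arXiv:2512.07470 — 3 statements merged into one kernel-verified Lean document; each statement's English description precedes it below -/
import Mathlib

section
/- Let q be the Kronig–Penney potential, let n ≥ 1, and assume Condition 1 holds for n. Then a real number λ ∈ I_n = [n² − M, n² + M] is a Dirichlet eigenvalue of L(q) if and only if the series Σ_{k=1}^∞ a_k(λ) converges and λ − n² + C_{2n} − Σ_{k=1}^∞ a_k(λ) = 0. -/
open MeasureTheory Filter Asymptotics

/-- Cosine Fourier coefficients `C_k = (1/π) ∫₀^π q(x) cos(kx) dx` of a real potential. -/
noncomputable def cosCoefR (q : ℝ → ℝ) (k : ℤ) : ℝ :=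
  (1 / Real.pi) * ∫ x in (0:ℝ)..Real.pi, q x * Real.cos ((k : ℝ) * x)

/-- `λ` is a Dirichlet eigenvalue of `L(q) = −d²/dx² + q` on `[0,π]` with eigenfunction `y`:
`y` is nontrivial, `y, y′` are absolutely continuous, `−y″ + q y = λ y` a.e. and
`y(0) = y(π) = 0`.  Absolute continuity and the a.e. differential equation are expressed
in their equivalent integral form. -/
def IsDirichletEigenpair (q : ℝ → ℂ) (lam : ℂ) (y : ℝ → ℂ) : Prop :=
  ∃ g : ℝ → ℂ,
    (∃ x ∈ Set.Icc (0:ℝ) Real.pi, y x ≠ 0) ∧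
    IntervalIntegrable g volume 0 Real.pi ∧
    IntervalIntegrable (fun t => (q t - lam) * y t) volume 0 Real.pi ∧
    (∀ x ∈ Set.Icc (0:ℝ) Real.pi, y x = y 0 + ∫ t in (0:ℝ)..x, g t) ∧
    (∀ x ∈ Set.Icc (0:ℝ) Real.pi, g x = g 0 + ∫ t in (0:ℝ)..x, (q t - lam) * y t) ∧
    y 0 = 0 ∧ y Real.pi = 0

/-- `λ` is a Dirichlet eigenvalue of `L(q)` on `[0,π]`. -/
def IsDirichletEV (q : ℝ → ℂ) (lam : ℂ) : Prop :=
  ∃ y : ℝ → ℂ, IsDirichletEigenpair q lam y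

/-- Condition 1 for the index `n`: `M ≤ 1/2` if `n = 1`, and `M < (2n−1)/2` if `n > 1`. -/
def Cond1 (M : ℝ) (n : ℕ) : Prop :=
  (n = 1 → M ≤ 1 / 2) ∧ (1 < n → M < (2 * (n : ℝ) - 1) / 2)

/-- The partial sum `n_1 + ⋯ + n_{j}` of the multi-index `v = (n_1, …, n_k)`. -/
def psum {k : ℕ} (v : Fin k → ℤ) (j : Fin k) : ℤ :=
  ∑ i ∈ Finset.univ.filter (fun i => i ≤ j), v i

/-- Admissibility of a multi-index: every partial sum avoids `0` and `−2n`. -/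
def adm (n : ℕ) {k : ℕ} (v : Fin k → ℤ) : Prop :=
  ∀ j : Fin k, psum v j ≠ 0 ∧ psum v j ≠ -(2 * (n : ℤ))

instance (n : ℕ) {k : ℕ} (v : Fin k → ℤ) : Decidable (adm n v) := by
  unfold adm; infer_instance

/-- The general term of `a_k(λ)`:
`C_{n_1}⋯C_{n_k}(C_{n_1+⋯+n_k} − C_{n_1+⋯+n_k+2n}) / Π_j (λ − (n+n_1+⋯+n_j)²)`. -/
noncomputable def aTerm (C : ℤ → ℝ) (n : ℕ) (k : ℕ) (lam : ℝ) (v : Fin k → ℤ) : ℝ :=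
  if adm n v then
    ((∏ i, C (v i)) * (C (∑ i, v i) - C ((∑ i, v i) + 2 * n))) /
      ∏ j, (lam - ((n : ℝ) + ((psum v j : ℤ) : ℝ))^2)
  else 0

/-- `a_k(λ)`, the full series over `ℤ^k` of admissible multi-indices. -/
noncomputable def aSum (C : ℤ → ℝ) (n k : ℕ) (lam : ℝ) : ℝ :=
  ∑' v : Fin k → ℤ, aTerm C n k lam v

/-- The truncated sum `a_{r,k,n}(λ)`, over multi-indices with entries in `[−r, r]`. -/
noncomputable def aTrunc (C : ℤ → ℝ) (n k r : ℕ) (lam : ℝ) : ℝ :=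
  ∑' v : Fin k → ℤ,
    if ∀ i, -(r : ℤ) ≤ v i ∧ v i ≤ (r : ℤ) then aTerm C n k lam v else 0

/-- `g_n(λ) = −C_{2n} + Σ_{k=1}^{s} a_{r,k,n}(λ)`. -/
noncomputable def gFun (C : ℤ → ℝ) (n r s : ℕ) (lam : ℝ) : ℝ :=
  -C (2 * n) + ∑ k ∈ Finset.Icc 1 s, aTrunc C n k r lam


/-!
In the orthonormal basis `√(2/π) sin(mx)`, `m ≥ 1`, of `L²(0, π)` the operator `L(q)` is
`diag(m²) + Q`, where `Q` is multiplication by `q` and has matrix entries `C (m - l) - C (m + l)`.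
Let `S` be diagonal with entries `(λ - m²)⁻¹` for `m ≠ n` and `0` for `m = n`. Eliminating all
coordinates but the `n`-th turns the eigenvalue equation into the scalar equation
`λ - n² = ∑ₖ ⟨eₙ, Q (S Q)ᵏ eₙ⟩`; the Neumann series converges because Condition 1 places `λ` at
distance more than `M ≥ ‖Q‖` from every `m²` with `m ≠ n`. Extending the sines oddly to `m ∈ ℤ`
unfolds the differences `C (m - l) - C (m + l)` into convolutions over `ℤ`, so the `k`-th term is
the sum over paths of length `k` in `ℤ`, that is, `a_k(λ)`; the term `k = 0` is `C₀ - C₂ₙ`.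
-/

section PathSums

variable {𝕜 : Type*} [NormedField 𝕜]

lemma psum_cons_zero {k : ℕ} (l : ℤ) (v : Fin k → ℤ) :
    psum (Fin.cons l v : Fin (k + 1) → ℤ) 0 = l := by
  simp [psum, Finset.sum_filter]

lemma psum_cons_succ {k : ℕ} (l : ℤ) (v : Fin k → ℤ) (j : Fin k) :
    psum (Fin.cons l v : Fin (k + 1) → ℤ) j.succ = l + psum v j := by
  simp [psum, Finset.sum_filter, Fin.sum_univ_succ]

/-- The weight of the lattice path `m, m + v₁, m + v₁ + v₂, …` with steps `v`: a factor `C` per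
step, a factor `s` per vertex after the first, and the matrix entry `C (p - n) - C (p + n)` at its
endpoint `p`. For `m = n` and `s` the reduced resolvent this is the general term of `a_k(λ)`; the
free starting point `m` is what makes the weight recursive in `k`. -/
noncomputable def pathWeight (C s : ℤ → 𝕜) (n : ℤ) {k : ℕ} (m : ℤ) (v : Fin k → ℤ) : 𝕜 :=
  (∏ i, C (v i)) * (C (m + ∑ i, v i - n) - C (m + ∑ i, v i + n)) * ∏ j, s (m + psum v j)

lemma pathWeight_fin_zero (C s : ℤ → 𝕜) (n m : ℤ) (v : Fin 0 → ℤ) :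
    pathWeight C s n m v = C (m - n) - C (m + n) := by
  simp [pathWeight]

lemma pathWeight_cons (C s : ℤ → 𝕜) (n : ℤ) {k : ℕ} (m l : ℤ) (v : Fin k → ℤ) :
    pathWeight C s n m (Fin.cons l v : Fin (k + 1) → ℤ) =
      C l * s (m + l) * pathWeight C s n (m + l) v := by
  simp only [pathWeight, Fin.prod_univ_succ, Fin.sum_univ_succ, psum_cons_zero, psum_cons_succ,
    Fin.cons_zero, Fin.cons_succ, add_assoc]
  ring

open scoped ENNReal in
lemma tsum_enorm_pathWeight_le {C : ℤ → 𝕜} {B : ℝ≥0∞} (hC : ∀ l, ‖C l‖ₑ ≤ B) (s : ℤ → 𝕜) (n : ℤ)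
    (k : ℕ) (m : ℤ) :
    ∑' v : Fin k → ℤ, ‖pathWeight C s n m v‖ₑ ≤ (B + B) * (B * ∑' l, ‖s l‖ₑ) ^ k := by
  induction k generalizing m with
  | zero =>
    simp only [pathWeight_fin_zero, tsum_fintype, Finset.univ_unique, Finset.sum_const,
      Finset.card_singleton, one_smul, pow_zero, mul_one]
    exact enorm_sub_le.trans (add_le_add (hC _) (hC _))
  | succ k ih =>
    have hshift : ∑' l, ‖s (m + l)‖ₑ = ∑' l, ‖s l‖ₑ :=
      (Equiv.addLeft m).tsum_eq fun l ↦ ‖s l‖ₑ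
    set K := (B + B) * (B * ∑' l, ‖s l‖ₑ) ^ k with hK
    calc ∑' v : Fin (k + 1) → ℤ, ‖pathWeight C s n m v‖ₑ
        = ∑' (l : ℤ) (v : Fin k → ℤ), ‖C l * s (m + l) * pathWeight C s n (m + l) v‖ₑ := by
          rw [← (Fin.consEquiv fun _ : Fin (k + 1) ↦ ℤ).tsum_eq, ENNReal.tsum_prod']
          simp only [Fin.consEquiv, Equiv.coe_fn_mk, pathWeight_cons]
      _ = ∑' l, ‖C l‖ₑ * ‖s (m + l)‖ₑ * ∑' v : Fin k → ℤ, ‖pathWeight C s n (m + l) v‖ₑ := by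
          simp only [enorm_mul, ENNReal.tsum_mul_left]
      _ ≤ ∑' l, B * ‖s (m + l)‖ₑ * K := by
          gcongr with l
          · exact hC l
          · exact ih (m + l)
      _ = B * (∑' l, ‖s l‖ₑ) * K := by
          rw [ENNReal.tsum_mul_right, ENNReal.tsum_mul_left, hshift]
      _ = (B + B) * (B * ∑' l, ‖s l‖ₑ) ^ (k + 1) := by rw [hK]; ring

variable [CompleteSpace 𝕜]

lemma summable_pathWeight {C s : ℤ → 𝕜} {B : ℝ} (hC : ∀ l, ‖C l‖ ≤ B)
    (hs : Summable fun l ↦ ‖s l‖) (n : ℤ) (k : ℕ) (m : ℤ) :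
    Summable fun v : Fin k → ℤ ↦ pathWeight C s n m v := by
  have hC' (l : ℤ) : ‖C l‖ₑ ≤ ENNReal.ofReal B := by
    rw [← ofReal_norm]
    exact ENNReal.ofReal_le_ofReal (hC l)
  have hs' := tsum_enorm_ne_top_iff_summable_norm.mpr hs
  exact .of_enorm (ne_top_of_le_ne_top (by finiteness) (tsum_enorm_pathWeight_le hC' s n k m))

lemma tsum_pathWeight_succ {C s : ℤ → 𝕜} {B : ℝ} (hC : ∀ l, ‖C l‖ ≤ B)
    (hs : Summable fun l ↦ ‖s l‖) (n : ℤ) (k : ℕ) (m : ℤ) :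
    ∑' v : Fin (k + 1) → ℤ, pathWeight C s n m v =
      ∑' l, C l * s (m + l) * ∑' v : Fin k → ℤ, pathWeight C s n (m + l) v := by
  let e := Fin.consEquiv fun _ : Fin (k + 1) ↦ ℤ
  have hsum := e.summable_iff.mpr (summable_pathWeight hC hs n (k + 1) m)
  refine ((e.tsum_eq _).symm.trans hsum.tsum_prod).trans ?_
  simp only [e, Fin.consEquiv, Equiv.coe_fn_mk, Function.comp_apply, pathWeight_cons, tsum_mul_left]

end PathSums

/-- The diagonal `(λ - l²)⁻¹` of the resolvent of `-d²/dx²` in the Fourier basis, with the entries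
of the unperturbed eigenvalue `n²` set to `0`. -/
noncomputable def reducedResolvent (n : ℤ) (lam : ℝ) (l : ℤ) : ℝ :=
  if l = n ∨ l = -n then 0 else (lam - (l : ℝ) ^ 2)⁻¹

lemma reducedResolvent_self (n : ℤ) (lam : ℝ) : reducedResolvent n lam n = 0 := by
  simp [reducedResolvent]

lemma reducedResolvent_neg (n : ℤ) (lam : ℝ) (l : ℤ) :
    reducedResolvent n lam (-l) = reducedResolvent n lam l := by
  simp [reducedResolvent, neg_eq_iff_eq_neg, or_comm]

lemma reducedResolvent_of_ne {n l : ℕ+} (h : l ≠ n) (lam : ℝ) :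
    reducedResolvent n lam l = (lam - (l : ℝ) ^ 2)⁻¹ := by
  have hne : ¬((l : ℤ) = n ∨ (l : ℤ) = -n) := by
    have := PNat.coe_injective.ne h
    have := l.pos
    omega
  rw [reducedResolvent, if_neg hne, Int.cast_natCast]

lemma tendsto_sq_sub_atTop (lam : ℝ) :
    Tendsto (fun l : ℤ ↦ (l : ℝ) ^ 2 - lam) cofinite atTop := by
  have habs : Tendsto (fun l : ℤ ↦ |(l : ℝ)|) cofinite atTop :=
    (tendsto_norm_cocompact_atTop (E := ℝ)).comp Int.tendsto_coe_cofinite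
  simpa only [Function.comp_def, sq_abs, sub_eq_add_neg] using
    tendsto_atTop_add_const_right _ (-lam) ((tendsto_pow_atTop two_ne_zero).comp habs)

lemma summable_norm_reducedResolvent (n : ℤ) (lam : ℝ) :
    Summable fun l ↦ ‖reducedResolvent n lam l‖ := by
  have hbase : Summable fun l : ℤ ↦ 2 * (1 / (l : ℝ) ^ 2) :=
    (Real.summable_one_div_int_pow.mpr one_lt_two).mul_left 2
  refine .of_norm_bounded_eventually hbase ?_
  filter_upwards [(tendsto_sq_sub_atTop (2 * |lam|)).eventually_gt_atTop 0] with l hl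
  have hlam := le_abs_self lam
  have hlam0 := abs_nonneg lam
  rw [norm_norm, reducedResolvent]
  split_ifs
  · rw [norm_zero]
    positivity
  · calc ‖(lam - (l : ℝ) ^ 2)⁻¹‖ = 1 / ((l : ℝ) ^ 2 - lam) := by
          rw [norm_inv, Real.norm_eq_abs, abs_sub_comm, abs_of_pos (by linarith), one_div]
      _ ≤ 1 / ((l : ℝ) ^ 2 / 2) := one_div_le_one_div_of_le (by linarith) (by linarith)
      _ = 2 * (1 / (l : ℝ) ^ 2) := by rw [one_div_div, mul_one_div]

lemma aTerm_eq_pathWeight (C : ℤ → ℝ) (n : ℕ) {k : ℕ} (lam : ℝ) (v : Fin k → ℤ) :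
    aTerm C n k lam v = pathWeight C (reducedResolvent n lam) n n v := by
  unfold aTerm pathWeight
  split_ifs with h
  · have hden (j : Fin k) : reducedResolvent n lam (n + psum v j) =
        (lam - ((n : ℝ) + (psum v j : ℝ)) ^ 2)⁻¹ := by
      have hne : ¬((n : ℤ) + psum v j = n ∨ (n : ℤ) + psum v j = -n) := by
        have := h j
        omega
      rw [reducedResolvent, if_neg hne, Int.cast_add, Int.cast_natCast]
    have hfst : (n : ℤ) + ∑ i, v i - n = ∑ i, v i := by ring
    have hsnd : (n : ℤ) + ∑ i, v i + n = ∑ i, v i + 2 * n := by ring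
    simp only [hden, hfst, hsnd, Finset.prod_inv_distrib, div_eq_mul_inv]
  · obtain ⟨j, hj⟩ : ∃ j, psum v j = 0 ∨ psum v j = -(2 * (n : ℤ)) := by
      simpa only [adm, not_forall, not_and_or, not_not] using h
    have hzero : reducedResolvent n lam (n + psum v j) = 0 := if_pos (by omega)
    exact (mul_eq_zero_of_right _ (Finset.prod_eq_zero (Finset.mem_univ j) hzero)).symm

/-! ### Schur complement of a perturbed diagonal operator -/

section SchurComplement

variable {𝕜 E : Type*} [NontriviallyNormedField 𝕜] [NormedAddCommGroup E] [NormedSpace 𝕜 E]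
  [CompleteSpace E]

lemma hasSum_dual_pow_apply {T : E →L[𝕜] E} (hT : ‖T‖ < 1) (ψ : StrongDual 𝕜 E) (e : E) :
    HasSum (fun k : ℕ ↦ ψ ((T ^ k) e)) (ψ ((∑' k : ℕ, T ^ k) e)) :=
  (summable_geometric_of_norm_lt_one hT).hasSum.mapL (ψ ∘L ContinuousLinearMap.apply 𝕜 E e)

lemma sub_apply_eq_smul_iff {T : E →L[𝕜] E} (hT : ‖T‖ < 1) {e y : E} {c : 𝕜} :
    y - T y = c • e ↔ y = c • (∑' k : ℕ, T ^ k) e := by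
  have hleft (x : E) : (∑' k : ℕ, T ^ k) (x - T x) = x :=
    DFunLike.congr_fun (geom_series_mul_neg T hT) x
  have hright (x : E) : (∑' k : ℕ, T ^ k) x - T ((∑' k : ℕ, T ^ k) x) = x :=
    DFunLike.congr_fun (mul_neg_geom_series T hT) x
  constructor
  · intro h
    rw [← map_smul, ← h, hleft]
  · rintro rfl
    rw [map_smul, ← smul_sub, hright]

lemma exists_sub_apply_eq_smul_iff_tsum_eq {T : E →L[𝕜] E} (hT : ‖T‖ < 1) {e : E}
    {φ : StrongDual 𝕜 E} (hφe : φ e = 1) (hφT : ∀ x, φ (T x) = 0) (ψ : StrongDual 𝕜 E) (d : 𝕜) :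
    (∃ y ≠ 0, y - T y = φ y • e ∧ d * φ y = ψ y) ↔ ∑' k : ℕ, ψ ((T ^ k) e) = d := by
  rw [(hasSum_dual_pow_apply hT ψ e).tsum_eq]
  set G := ∑' k : ℕ, T ^ k
  constructor
  · rintro ⟨y, hy0, hy, hψ⟩
    have hyG : y = φ y • G e := (sub_apply_eq_smul_iff hT).mp hy
    have hφy : φ y ≠ 0 := fun h ↦ hy0 (by rw [hyG, h, zero_smul])
    refine mul_left_cancel₀ hφy ?_
    rw [mul_comm _ d, hψ, ← smul_eq_mul, ← map_smul, ← hyG]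
  · intro hd
    have hG : G e - T (G e) = (1 : 𝕜) • e := (sub_apply_eq_smul_iff hT).mpr (one_smul 𝕜 (G e)).symm
    have hφG : φ (G e) = 1 := by
      simpa only [map_sub, hφT, sub_zero, one_smul, hφe] using congrArg φ hG
    refine ⟨G e, fun h ↦ ?_, by rw [hφG, hG], by rw [hφG, mul_one, hd]⟩
    rw [h, map_zero] at hφG
    exact zero_ne_one hφG

end SchurComplement

section DiagonalOperator

open scoped InnerProductSpace

variable {ι 𝕜 H : Type*} [RCLike 𝕜] [NormedAddCommGroup H] [InnerProductSpace 𝕜 H]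

/-- The operator that multiplies the `i`-th coordinate in the Hilbert basis `b` by `s i`. -/
noncomputable def diagonalOperator (b : HilbertBasis ι 𝕜 H) {s : ι → 𝕜} {K : ℝ} (hK : 0 ≤ K)
    (hs : ∀ i, ‖s i‖ ≤ K) : H →L[𝕜] H :=
  b.repr.symm.toContinuousLinearEquiv ∘L
    lp.mapCLM 2 (fun i ↦ ContinuousLinearMap.mul 𝕜 𝕜 (s i)) hK (by simpa using hs) ∘L
      b.repr.toContinuousLinearEquiv

lemma inner_diagonalOperator (b : HilbertBasis ι 𝕜 H) {s : ι → 𝕜} {K : ℝ} (hK : 0 ≤ K)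
    (hs : ∀ i, ‖s i‖ ≤ K) (x : H) (i : ι) :
    ⟪b i, diagonalOperator b hK hs x⟫_𝕜 = s i * ⟪b i, x⟫_𝕜 := by
  simp [← b.repr_apply_apply, diagonalOperator]

lemma norm_diagonalOperator_le (b : HilbertBasis ι 𝕜 H) {s : ι → 𝕜} {K : ℝ} (hK : 0 ≤ K)
    (hs : ∀ i, ‖s i‖ ≤ K) : ‖diagonalOperator b hK hs‖ ≤ K := by
  refine ContinuousLinearMap.opNorm_le_bound _ hK fun x ↦ ?_
  have h := (lp.mapCLM 2 (fun i ↦ ContinuousLinearMap.mul 𝕜 𝕜 (s i)) hK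
    (by simpa using hs)).le_of_opNorm_le (lp.norm_mapCLM_le 2 _ hK _) (b.repr x)
  simpa [diagonalOperator] using h

lemma ext_inner_left_hilbertBasis (b : HilbertBasis ι 𝕜 H) {x y : H}
    (h : ∀ i, ⟪b i, x⟫_𝕜 = ⟪b i, y⟫_𝕜) : x = y := by
  refine b.repr.injective (lp.ext (funext fun i ↦ ?_))
  simpa only [b.repr_apply_apply] using h i

lemma sub_apply_eq_inner_smul_iff (b : HilbertBasis ι 𝕜 H) {Q S : H →L[𝕜] H} {s d : ι → 𝕜} {i₀ : ι}
    (hS : ∀ x i, ⟪b i, S x⟫_𝕜 = s i * ⟪b i, x⟫_𝕜) (hs₀ : s i₀ = 0)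
    (hsd : ∀ i ≠ i₀, s i * d i = 1) (y : H) :
    y - S (Q y) = ⟪b i₀, y⟫_𝕜 • b i₀ ↔ ∀ i ≠ i₀, d i * ⟪b i, y⟫_𝕜 = ⟪b i, Q y⟫_𝕜 := by
  constructor
  · intro h i hi
    have hcoord : ⟪b i, y⟫_𝕜 = s i * ⟪b i, Q y⟫_𝕜 := by
      simpa only [inner_sub_right, hS, inner_smul_right, b.orthonormal.2 hi, mul_zero,
        sub_eq_zero] using congrArg (fun x ↦ ⟪b i, x⟫_𝕜) h
    rw [hcoord, mul_left_comm, ← mul_assoc, hsd i hi, one_mul]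
  · intro h
    refine ext_inner_left_hilbertBasis b fun i ↦ ?_
    rw [inner_sub_right, inner_smul_right, hS]
    rcases eq_or_ne i i₀ with rfl | hi
    · rw [hs₀, zero_mul, sub_zero, inner_self_eq_one_of_norm_eq_one (b.orthonormal.1 i), mul_one]
    · rw [b.orthonormal.2 hi, mul_zero, ← h i hi, ← mul_assoc, hsd i hi, one_mul, sub_self]

lemma exists_forall_mul_inner_eq_iff_tsum_eq [CompleteSpace H] (b : HilbertBasis ι 𝕜 H)
    {Q S : H →L[𝕜] H} {s d : ι → 𝕜} {i₀ : ι} (hS : ∀ x i, ⟪b i, S x⟫_𝕜 = s i * ⟪b i, x⟫_𝕜)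
    (hs₀ : s i₀ = 0) (hsd : ∀ i ≠ i₀, s i * d i = 1) (hSQ : ‖S * Q‖ < 1) :
    (∃ y ≠ 0, ∀ i, d i * ⟪b i, y⟫_𝕜 = ⟪b i, Q y⟫_𝕜) ↔
      ∑' k : ℕ, ⟪b i₀, Q (((S * Q) ^ k) (b i₀))⟫_𝕜 = d i₀ := by
  have hφe : innerSL 𝕜 (b i₀) (b i₀) = 1 := inner_self_eq_one_of_norm_eq_one (b.orthonormal.1 i₀)
  have hφT (x : H) : innerSL 𝕜 (b i₀) ((S * Q) x) = 0 :=
    (hS (Q x) i₀).trans (by rw [hs₀, zero_mul])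
  refine Iff.trans (exists_congr fun y ↦ and_congr_right fun _ ↦ ?_)
    (exists_sub_apply_eq_smul_iff_tsum_eq hSQ hφe hφT (innerSL 𝕜 (b i₀) ∘L Q) (d i₀))
  rw [mul_apply_eq_comp, innerSL_apply_apply, ContinuousLinearMap.comp_apply,
    innerSL_apply_apply, sub_apply_eq_inner_smul_iff b hS hs₀ hsd]
  refine ⟨fun h ↦ ⟨fun i _ ↦ h i, h i₀⟩, fun h i ↦ ?_⟩
  rcases eq_or_ne i i₀ with rfl | hi
  exacts [h.2, h.1 i hi]

end DiagonalOperator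

/-! ### Multiplication operators and the sine basis of `L²(0, π)` -/

section MulOperator

open scoped ENNReal

variable {α 𝕜 : Type*} [MeasurableSpace α] {μ : Measure α} [RCLike 𝕜]

/-- Multiplication by the essentially bounded function `q`, as an operator on `L²(μ)`. -/
noncomputable def mulOperator {q : α → 𝕜} (hq : MemLp q ∞ μ) : Lp 𝕜 2 μ →L[𝕜] Lp 𝕜 2 μ :=
  (ContinuousLinearMap.mul 𝕜 𝕜).holderL μ ∞ 2 2 hq.toLp

lemma coeFn_mulOperator {q : α → 𝕜} (hq : MemLp q ∞ μ) (v : Lp 𝕜 2 μ) :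
    mulOperator hq v =ᵐ[μ] fun x ↦ q x * v x := by
  filter_upwards [(ContinuousLinearMap.mul 𝕜 𝕜).coeFn_holder (r := 2) hq.toLp v, hq.coeFn_toLp]
    with x hx hqx
  rw [← hqx]
  exact hx

lemma norm_mulOperator_le {q : α → 𝕜} (hq : MemLp q ∞ μ) {M : ℝ} (hM : 0 ≤ M)
    (hqM : ∀ᵐ x ∂μ, ‖q x‖ ≤ M) : ‖mulOperator hq‖ ≤ M := by
  refine ContinuousLinearMap.opNorm_le_bound _ hM fun v ↦ Lp.norm_le_mul_norm_of_ae_le_mul ?_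
  filter_upwards [coeFn_mulOperator hq v, hqM] with x hx hqx
  rw [hx, norm_mul]
  gcongr

end MulOperator

open scoped InnerProductSpace

/-- Lebesgue measure on the interval `(0, π]`. -/
noncomputable abbrev intervalMeasure : Measure ℝ := volume.restrict (Set.Ioc 0 Real.pi)

/-- The complex Hilbert space `L²(0, π)`. -/
abbrev L2Interval : Type := Lp ℂ 2 intervalMeasure

/-- The `L²(0, π)`-normalized sine `√(2/π) sin(mx)`. It is defined for all integers `m`, so that
sums over paths in `ℤ` make sense; the orthonormal basis consists of those with `m > 0`. -/
noncomputable def sine (m : ℤ) (x : ℝ) : ℝ := √(2 / Real.pi) * Real.sin (m * x)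

lemma continuous_sine (m : ℤ) : Continuous (sine m) := by
  unfold sine
  fun_prop

lemma sine_neg (m : ℤ) (x : ℝ) : sine (-m) x = -sine m x := by
  simp [sine]

lemma memLp_of_continuousOn_Icc {f : ℝ → ℂ} (hf : ContinuousOn f (Set.Icc 0 Real.pi)) :
    MemLp f 2 intervalMeasure := by
  obtain ⟨K, hK⟩ := isCompact_Icc.exists_bound_of_continuousOn hf
  refine .of_bound ((hf.mono Set.Ioc_subset_Icc_self).aestronglyMeasurable measurableSet_Ioc) K ?_
  filter_upwards [ae_restrict_mem measurableSet_Ioc] with x hx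
  exact hK x (Set.Ioc_subset_Icc_self hx)

lemma memLp_sine (m : ℤ) : MemLp (fun x ↦ (sine m x : ℂ)) 2 intervalMeasure :=
  memLp_of_continuousOn_Icc (Complex.continuous_ofReal.comp (continuous_sine m)).continuousOn

/-- The function `sine m` as an element of `L²(0, π)`. -/
noncomputable def sineL2 (m : ℤ) : L2Interval := (memLp_sine m).toLp

lemma coeFn_sineL2 (m : ℤ) : sineL2 m =ᵐ[intervalMeasure] fun x ↦ (sine m x : ℂ) :=
  (memLp_sine m).coeFn_toLp

lemma sineL2_neg (m : ℤ) : sineL2 (-m) = -sineL2 m := by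
  simp only [sineL2, ← MemLp.toLp_neg, sine_neg, Complex.ofReal_neg]
  rfl

lemma sineL2_zero : sineL2 0 = 0 := by
  rw [Lp.eq_zero_iff_ae_eq_zero]
  filter_upwards [coeFn_sineL2 0] with x hx
  simp [hx, sine]

lemma sineL2_induction {P : L2Interval → Prop} (zero : P 0) (neg : ∀ v, P v → P (-v))
    (pos : ∀ m : ℕ+, P (sineL2 m)) (m : ℤ) : P (sineL2 m) := by
  have hnat (k : ℕ) : P (sineL2 k) := by
    rcases k.eq_zero_or_pos with rfl | hk
    · rwa [Nat.cast_zero, sineL2_zero]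
    · exact pos ⟨k, hk⟩
  obtain ⟨k, rfl | rfl⟩ := m.eq_nat_or_neg
  · exact hnat k
  · rw [sineL2_neg]
    exact neg _ (hnat k)

lemma inner_sineL2 (m : ℤ) {v : L2Interval} {f : ℝ → ℂ} (h : v =ᵐ[intervalMeasure] f) :
    ⟪sineL2 m, v⟫_ℂ = ∫ x in (0 : ℝ)..Real.pi, sine m x • f x := by
  rw [L2.inner_def, intervalIntegral.integral_of_le Real.pi_pos.le]
  refine integral_congr_ae ?_
  filter_upwards [h, coeFn_sineL2 m] with x hx hsine
  rw [hx, hsine, RCLike.inner_apply, Complex.conj_ofReal, mul_comm, Complex.real_smul]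

lemma sine_mul_sine (m l : ℤ) (x : ℝ) : sine m x * sine l x =
    1 / Real.pi * (Real.cos ((m - l : ℤ) * x) - Real.cos ((m + l : ℤ) * x)) := by
  have hsqrt : √(2 / Real.pi) * √(2 / Real.pi) = 2 / Real.pi := Real.mul_self_sqrt (by positivity)
  push_cast
  calc sine m x * sine l x
      = √(2 / Real.pi) * √(2 / Real.pi) * (Real.sin (m * x) * Real.sin (l * x)) := by
        unfold sine
        ring
    _ = 1 / Real.pi * (Real.cos ((m - l) * x) - Real.cos ((m + l) * x)) := by
        rw [hsqrt, sub_mul, add_mul, Real.cos_sub, Real.cos_add]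
        ring

lemma integral_sine_mul_mul_sine {q : ℝ → ℝ} (hq : IntervalIntegrable q volume 0 Real.pi)
    (m l : ℤ) : ∫ x in (0 : ℝ)..Real.pi, sine m x * (q x * sine l x) =
      cosCoefR q (m - l) - cosCoefR q (m + l) := by
  have hcos (k : ℤ) : IntervalIntegrable (fun x ↦ q x * Real.cos (k * x)) volume 0 Real.pi :=
    hq.mul_continuousOn (by fun_prop)
  have hprod (x : ℝ) : sine m x * (q x * sine l x) = 1 / Real.pi *
      (q x * Real.cos ((m - l : ℤ) * x) - q x * Real.cos ((m + l : ℤ) * x)) := by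
    rw [mul_left_comm, sine_mul_sine]
    ring
  simp only [hprod]
  rw [intervalIntegral.integral_const_mul, intervalIntegral.integral_sub (hcos _) (hcos _), mul_sub,
    cosCoefR, cosCoefR]

lemma cosCoefR_neg (q : ℝ → ℝ) (k : ℤ) : cosCoefR q (-k) = cosCoefR q k := by
  simp [cosCoefR]

lemma cosCoefR_one (k : ℤ) : cosCoefR (fun _ ↦ 1) k = if k = 0 then 1 else 0 := by
  unfold cosCoefR
  split_ifs with hk
  · simp [hk, Real.pi_ne_zero]
  · have hk' : (k : ℝ) ≠ 0 := Int.cast_ne_zero.mpr hk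
    simp only [one_mul]
    rw [intervalIntegral.integral_comp_mul_left Real.cos hk']
    simp [Real.sin_int_mul_pi]

lemma abs_cosCoefR_le {q : ℝ → ℝ} {M : ℝ} (hqM : ∀ᵐ x ∂intervalMeasure, |q x| ≤ M) (k : ℤ) :
    |cosCoefR q k| ≤ M := by
  have hint : ‖∫ x in (0 : ℝ)..Real.pi, q x * Real.cos (k * x)‖ ≤ M * |Real.pi - 0| := by
    refine intervalIntegral.norm_integral_le_of_norm_le_const_ae ?_
    rw [Set.uIoc_of_le Real.pi_pos.le]
    filter_upwards [(ae_restrict_iff' measurableSet_Ioc).mp hqM] with x hx hmem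
    calc ‖q x * Real.cos (k * x)‖ = |q x| * |Real.cos (k * x)| := abs_mul _ _
      _ ≤ |q x| * 1 := by gcongr; exact Real.abs_cos_le_one _
      _ ≤ M := (mul_one |q x|).trans_le (hx hmem)
  rw [sub_zero, abs_of_pos Real.pi_pos, Real.norm_eq_abs] at hint
  rw [cosCoefR, abs_mul, abs_of_pos (by positivity), one_div, inv_mul_le_iff₀ Real.pi_pos, mul_comm]
  exact hint

open scoped ENNReal in
lemma inner_sineL2_mulOperator_sineL2 {q : ℝ → ℝ}
    (hq : MemLp (fun x ↦ (q x : ℂ)) ∞ intervalMeasure) (m l : ℤ) :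
    ⟪sineL2 m, mulOperator hq (sineL2 l)⟫_ℂ =
      ((cosCoefR q (m - l) - cosCoefR q (m + l) : ℝ) : ℂ) := by
  have hae : mulOperator hq (sineL2 l) =ᵐ[intervalMeasure]
      fun x ↦ ((q x * sine l x : ℝ) : ℂ) := by
    filter_upwards [coeFn_mulOperator hq (sineL2 l), coeFn_sineL2 l] with x hx hsine
    rw [hx, hsine, Complex.ofReal_mul]
  have hqint : IntervalIntegrable q volume 0 Real.pi :=
    (intervalIntegrable_iff_integrableOn_Ioc_of_le Real.pi_pos.le).mpr
      (hq.integrable le_top).re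
  rw [inner_sineL2 m hae, ← integral_sine_mul_mul_sine hqint, ← intervalIntegral.integral_ofReal]
  simp only [Complex.real_smul, Complex.ofReal_mul]

lemma orthonormal_sineL2 : Orthonormal ℂ fun m : ℕ+ ↦ sineL2 m := by
  classical
  rw [orthonormal_iff_ite]
  intro m l
  have hint : ⟪sineL2 m, sineL2 l⟫_ℂ =
      ((cosCoefR (fun _ ↦ 1) (m - l) - cosCoefR (fun _ ↦ 1) (m + l) : ℝ) : ℂ) := by
    rw [inner_sineL2 m (coeFn_sineL2 l), ← integral_sine_mul_mul_sine (by simp),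
      ← intervalIntegral.integral_ofReal]
    simp only [Complex.real_smul, one_mul, Complex.ofReal_mul]
  have hadd : ¬((m : ℤ) + l = 0) := by
    have := m.pos
    omega
  rw [hint, cosCoefR_one, cosCoefR_one, if_neg hadd]
  simp [sub_eq_zero, apply_ite ((↑) : ℝ → ℂ)]

lemma norm_sineL2_le_one (m : ℤ) : ‖sineL2 m‖ ≤ 1 :=
  sineL2_induction (P := fun v ↦ ‖v‖ ≤ 1) (by simp) (fun v hv ↦ by rwa [norm_neg])
    (fun l ↦ (orthonormal_sineL2.1 l).le) m
lemma ae_eq_zero_of_fourierCoeffOn_eq_zero {a b : ℝ} (hab : a < b) {f : ℝ → ℂ}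
    (hf : MemLp f 2 (volume.restrict (Set.Ioc a b))) (h : ∀ m, fourierCoeffOn hab f m = 0) :
    f =ᵐ[volume.restrict (Set.Ioc a b)] 0 := by
  have hparseval : (b - a)⁻¹ • ∫ x in a..b, ‖f x‖ ^ 2 = 0 := by
    refine (hasSum_sq_fourierCoeffOn hab hf).unique ?_
    simp [h, hasSum_zero]
  have hint : ∫ x in Set.Ioc a b, ‖f x‖ ^ 2 = 0 := by
    rw [← intervalIntegral.integral_of_le hab.le]
    exact (smul_eq_zero.mp hparseval).resolve_left (inv_ne_zero (sub_pos.mpr hab).ne')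
  rw [integral_eq_zero_iff_of_nonneg (fun x ↦ by positivity)
    (hf.integrable_norm_pow two_ne_zero)] at hint
  filter_upwards [hint] with x hx
  simpa using hx

lemma integral_neg_self_eq_integral_add_comp_neg {E : Type*} [NormedAddCommGroup E]
    [NormedSpace ℝ E] {a : ℝ} (ha : 0 ≤ a) {f : ℝ → E} (hf : IntervalIntegrable f volume (-a) a) :
    ∫ x in -a..a, f x = ∫ x in 0..a, (f x + f (-x)) := by
  have hneg : IntervalIntegrable f volume (-a) 0 := hf.mono_set (by
    rw [Set.uIcc_of_le (by linarith), Set.uIcc_of_le (by linarith)]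
    exact Set.Icc_subset_Icc_right ha)
  have hpos : IntervalIntegrable f volume 0 a := hneg.symm.trans hf
  have hcomp : ∫ x in 0..a, f (-x) = ∫ x in -a..0, f x := by
    simp [intervalIntegral.integral_comp_neg]
  have hposneg : IntervalIntegrable (fun x ↦ f (-x)) volume 0 a := by
    simpa using ((IntervalIntegrable.iff_comp_neg (by finiteness)).mp hneg).symm
  rw [intervalIntegral.integral_add hpos hposneg, hcomp, add_comm,
    intervalIntegral.integral_add_adjacent_intervals hneg hpos]

lemma fourierCoeffOn_of_odd {f : ℝ → ℂ} (hodd : ∀ x, f (-x) = -f x)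
    (hf : IntervalIntegrable f volume (-Real.pi) Real.pi) (m : ℤ) :
    fourierCoeffOn (neg_lt_self Real.pi_pos) f m =
      -(Complex.I / Real.pi) * ∫ x in (0 : ℝ)..Real.pi, Real.sin (m * x) • f x := by
  have hfourier (x : ℝ) : fourier (-m) (x : AddCircle (Real.pi - -Real.pi)) =
      Complex.exp (-(m * x) * Complex.I) := by
    rw [fourier_coe_apply]
    congr 1
    have : (Real.pi : ℂ) ≠ 0 := Complex.ofReal_ne_zero.mpr Real.pi_ne_zero
    push_cast
    field_simp
    ring
  have hexp (x : ℝ) : Complex.exp (-(m * x) * Complex.I) • f x +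
      Complex.exp (-(m * (-x : ℝ)) * Complex.I) • f (-x) =
        -(2 * Complex.I) * (Real.sin (m * x) • f x) := by
    rw [hodd, Complex.ofReal_neg, Complex.exp_mul_I, Complex.exp_mul_I, Complex.real_smul,
      Complex.ofReal_sin]
    simp only [mul_neg, neg_neg, Complex.cos_neg, Complex.sin_neg, smul_eq_mul]
    push_cast
    ring
  have hint : IntervalIntegrable (fun x : ℝ ↦ Complex.exp (-(m * x) * Complex.I) • f x) volume
      (-Real.pi) Real.pi := hf.continuousOn_mul (by fun_prop)
  rw [fourierCoeffOn_eq_integral]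
  simp only [hfourier]
  rw [integral_neg_self_eq_integral_add_comp_neg Real.pi_pos.le hint]
  simp only [hexp]
  rw [intervalIntegral.integral_const_mul, Complex.real_smul]
  push_cast
  field_simp
  ring

lemma integral_sin_smul_eq_zero {v : L2Interval} (h : ∀ m : ℕ+, ⟪sineL2 m, v⟫_ℂ = 0) (m : ℤ) :
    ∫ x in (0 : ℝ)..Real.pi, Real.sin (m * x) • v x = 0 := by
  have hall : ⟪sineL2 m, v⟫_ℂ = 0 :=
    sineL2_induction (P := fun u ↦ ⟪u, v⟫_ℂ = 0) (inner_zero_left v)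
      (fun u hu ↦ by rw [inner_neg_left, hu, neg_zero]) h m
  have hsqrt : √(2 / Real.pi) ≠ 0 := (Real.sqrt_pos.mpr (by positivity)).ne'
  rw [inner_sineL2 m (EventuallyEq.refl _ _)] at hall
  simp only [sine, mul_smul, intervalIntegral.integral_smul] at hall
  exact (smul_eq_zero.mp hall).resolve_left hsqrt

lemma eq_zero_of_inner_sineL2_eq_zero {v : L2Interval} (h : ∀ m : ℕ+, ⟪sineL2 m, v⟫_ℂ = 0) :
    v = 0 := by
  set F : ℝ → ℂ := (Set.Ioc 0 Real.pi).indicator v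
  -- the odd extension of `v` to `[-π, π]`
  set f : ℝ → ℂ := fun x ↦ F x - F (-x) with hf
  have hfv : ∀ x ∈ Set.Ioc 0 Real.pi, f x = v x := fun x hx ↦ by
    have hneg : -x ∉ Set.Ioc 0 Real.pi := fun hmem ↦ by linarith [hx.1, hmem.1]
    simp only [hf, F, Set.indicator_of_mem hx, Set.indicator_of_notMem hneg, sub_zero]
  have hFmem : MemLp F 2 volume := (memLp_indicator_iff_restrict measurableSet_Ioc).mpr (Lp.memLp v)
  have hfmem : MemLp f 2 volume :=
    hFmem.sub (hFmem.comp_measurePreserving (Measure.measurePreserving_neg volume))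
  have hfint : IntervalIntegrable f volume (-Real.pi) Real.pi := by
    rw [intervalIntegrable_iff_integrableOn_Ioc_of_le (neg_le_self Real.pi_pos.le)]
    exact (hfmem.restrict _).integrable one_le_two
  have hcoeff (m : ℤ) : fourierCoeffOn (neg_lt_self Real.pi_pos) f m = 0 := by
    rw [fourierCoeffOn_of_odd (fun x ↦ by simp [hf]) hfint]
    refine mul_eq_zero_of_right _ (Eq.trans ?_ (integral_sin_smul_eq_zero h m))
    refine intervalIntegral.integral_congr_ae (.of_forall fun x hx ↦ ?_)
    rw [hfv x (by rwa [Set.uIoc_of_le Real.pi_pos.le] at hx)]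
  have hzero := ae_restrict_of_ae_restrict_of_subset
    (Set.Ioc_subset_Ioc_left (neg_nonpos.mpr Real.pi_pos.le))
    (ae_eq_zero_of_fourierCoeffOn_eq_zero _ (hfmem.restrict _) hcoeff)
  rw [Lp.eq_zero_iff_ae_eq_zero]
  filter_upwards [hzero, ae_restrict_mem measurableSet_Ioc] with x hx hmem
  rw [← hfv x hmem, hx]

/-- The Hilbert basis `√(2/π) sin(mx)`, `m ≥ 1`, of `L²(0, π)`: the Dirichlet eigenfunctions of
`-d²/dx²`. -/
noncomputable def sineBasis : HilbertBasis ℕ+ ℂ L2Interval :=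
  .mkOfOrthogonalEqBot orthonormal_sineL2 <| (Submodule.eq_bot_iff _).mpr fun v hv ↦
    eq_zero_of_inner_sineL2_eq_zero fun m ↦
      (Submodule.mem_orthogonal _ v).mp hv _ (Submodule.subset_span ⟨m, rfl⟩)

lemma sineBasis_apply (m : ℕ+) : sineBasis m = sineL2 m := by
  simp [sineBasis]

/-! ### The Dirichlet problem in the sine basis -/

section Primitive

variable {E F : Type*} [NormedAddCommGroup E] [NormedSpace ℝ E] [NormedAddCommGroup F]
  [NormedSpace ℝ F] {f g y : ℝ → E} {a b : ℝ}

/-- `y` is absolutely continuous on `[a, b]` with integrable a.e. derivative `g`, expressed as in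
`IsDirichletEigenpair` by the fundamental theorem of calculus. -/
def IsPrimitiveOn (g y : ℝ → E) (a b : ℝ) : Prop :=
  IntervalIntegrable g volume a b ∧ ∀ x ∈ Set.uIcc a b, y x = y a + ∫ t in a..x, g t

lemma isPrimitiveOn_add_integral (hg : IntervalIntegrable g volume a b) (c : E) :
    IsPrimitiveOn g (fun x ↦ c + ∫ t in a..x, g t) a b :=
  ⟨hg, by simp⟩

lemma IsPrimitiveOn.continuousOn (h : IsPrimitiveOn g y a b) : ContinuousOn y (Set.uIcc a b) :=
  (continuousOn_const.add
    (intervalIntegral.continuousOn_primitive_interval' h.1 Set.left_mem_uIcc)).congr h.2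

lemma IsPrimitiveOn.congr_ae (h : IsPrimitiveOn f y a b)
    (hfg : f =ᵐ[volume.restrict (Set.uIoc a b)] g) : IsPrimitiveOn g y a b := by
  refine ⟨h.1.congr_ae hfg, fun x hx ↦ ?_⟩
  rw [h.2 x hx]
  congr 1
  exact intervalIntegral.integral_congr_ae_restrict
    (ae_restrict_of_ae_restrict_of_subset (Set.uIoc_subset_uIoc_of_uIcc_subset_uIcc
      (Set.uIcc_subset_uIcc_left hx)) hfg)

lemma IsPrimitiveOn.clm_comp [CompleteSpace E] [CompleteSpace F] (h : IsPrimitiveOn g y a b)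
    (L : E →L[ℝ] F) : IsPrimitiveOn (fun x ↦ L (g x)) (fun x ↦ L (y x)) a b := by
  refine ⟨⟨L.integrable_comp h.1.1, L.integrable_comp h.1.2⟩, fun x hx ↦ ?_⟩
  beta_reduce
  rw [h.2 x hx, map_add,
    L.intervalIntegral_comp_comm (h.1.mono_set (Set.uIcc_subset_uIcc_left hx))]

lemma IsPrimitiveOn.integral_deriv_mul {g y ψ : ℝ → ℝ} (h : IsPrimitiveOn g y a b)
    (hψ : ContDiff ℝ 1 ψ) :
    ∫ x in a..b, deriv ψ x * y x = ψ b * y b - ψ a * y a - ∫ x in a..b, ψ x * g x := by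
  set Y : ℝ → ℝ := fun x ↦ y a + ∫ t in a..x, g t
  have hyY : ∀ x ∈ Set.uIcc a b, y x = Y x := h.2
  have hY : AbsolutelyContinuousOnInterval Y a b :=
    (contDiffOn_const (n := 1)).absolutelyContinuousOnInterval.add
      (h.1.absolutelyContinuousOnInterval_intervalIntegral Set.left_mem_uIcc)
  have hderiv : ∫ x in a..b, ψ x * deriv Y x = ∫ x in a..b, ψ x * g x := by
    refine intervalIntegral.integral_congr_ae ?_
    filter_upwards [h.1.ae_hasDerivAt_integral] with x hx hmem
    rw [((hx (Set.uIoc_subset_uIcc hmem) a Set.left_mem_uIcc).const_add (y a)).deriv]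
  rw [intervalIntegral.integral_congr fun x hx ↦ congrArg (deriv ψ x * ·) (hyY x hx),
    hyY a Set.left_mem_uIcc, hyY b Set.right_mem_uIcc, ← hderiv,
    hψ.contDiffOn.absolutelyContinuousOnInterval.integral_mul_deriv_eq_deriv_mul hY]
  ring

lemma IsPrimitiveOn.integral_deriv_smul [CompleteSpace E] {ψ : ℝ → ℝ} (h : IsPrimitiveOn g y a b)
    (hψ : ContDiff ℝ 1 ψ) :
    ∫ x in a..b, deriv ψ x • y x = ψ b • y b - ψ a • y a - ∫ x in a..b, ψ x • g x := by
  have hy : IntervalIntegrable (fun x ↦ deriv ψ x • y x) volume a b :=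
    ((hψ.continuous_deriv le_rfl).continuousOn.smul h.continuousOn).intervalIntegrable
  have hg : IntervalIntegrable (fun x ↦ ψ x • g x) volume a b :=
    h.1.continuousOn_smul hψ.continuous.continuousOn
  refine (SeparatingDual.eq_iff_forall_dual_eq (R := ℝ)).mpr fun L ↦ ?_
  rw [map_sub, map_sub, ← L.intervalIntegral_comp_comm hy, ← L.intervalIntegral_comp_comm hg]
  simpa only [map_smul, smul_eq_mul] using (h.clm_comp L).integral_deriv_mul hψ

end Primitive

section DirichletProblem

variable {E : Type*} [NormedAddCommGroup E] [NormedSpace ℝ E] {f f' y : ℝ → E}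

/-- `y` solves the Dirichlet problem `y″ = f`, `y(0) = y(π) = 0` on `[0, π]`, in the sense of
Carathéodory: `y` and `y′` are absolutely continuous and the equation holds a.e. -/
def IsDirichletSolution (f y : ℝ → E) : Prop :=
  (∃ g, IsPrimitiveOn f g 0 Real.pi ∧ IsPrimitiveOn g y 0 Real.pi) ∧ y 0 = 0 ∧ y Real.pi = 0

lemma isDirichletEV_iff_exists_isDirichletSolution {q : ℝ → ℂ} {lam : ℂ} : IsDirichletEV q lam ↔
    ∃ y : ℝ → ℂ, (∃ x ∈ Set.Icc 0 Real.pi, y x ≠ 0) ∧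
      IsDirichletSolution (fun t ↦ (q t - lam) * y t) y := by
  simp only [IsDirichletEV, IsDirichletEigenpair, IsDirichletSolution, IsPrimitiveOn,
    Set.uIcc_of_le Real.pi_pos.le]
  constructor
  · rintro ⟨y, g, hne, hgint, hfint, hy, hg, hends⟩
    exact ⟨y, hne, ⟨g, ⟨hfint, hg⟩, hgint, hy⟩, hends⟩
  · rintro ⟨y, hne, ⟨g, ⟨hfint, hg⟩, hgint, hy⟩, hends⟩
    exact ⟨y, g, hne, hgint, hfint, hy, hg, hends⟩

lemma IsDirichletSolution.continuousOn (h : IsDirichletSolution f y) :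
    ContinuousOn y (Set.Icc 0 Real.pi) := by
  obtain ⟨⟨g, -, hy⟩, -, -⟩ := h
  simpa only [Set.uIcc_of_le Real.pi_pos.le] using hy.continuousOn

lemma IsDirichletSolution.congr_ae (h : IsDirichletSolution f y)
    (hff' : f =ᵐ[intervalMeasure] f') : IsDirichletSolution f' y := by
  obtain ⟨⟨g, hg, hy⟩, h0, hpi⟩ := h
  refine ⟨⟨g, hg.congr_ae ?_, hy⟩, h0, hpi⟩
  rwa [Set.uIoc_of_le Real.pi_pos.le]

variable [CompleteSpace E]

lemma exists_isDirichletSolution (hf : IntervalIntegrable f volume 0 Real.pi) :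
    ∃ y, IsDirichletSolution f y := by
  have hG : IntervalIntegrable (fun x ↦ ∫ t in 0..x, f t) volume 0 Real.pi :=
    (intervalIntegral.continuousOn_primitive_interval' hf Set.left_mem_uIcc).intervalIntegrable
  -- the initial slope for which `∫₀^π y′ = 0`
  let c : E := -(Real.pi⁻¹ • ∫ x in 0..Real.pi, ∫ t in 0..x, f t)
  have hg := isPrimitiveOn_add_integral hf c
  refine ⟨_, ⟨_, hg, isPrimitiveOn_add_integral hg.continuousOn.intervalIntegrable 0⟩, by simp, ?_⟩
  rw [intervalIntegral.integral_add intervalIntegrable_const hG, intervalIntegral.integral_const,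
    sub_zero, smul_neg, smul_inv_smul₀ Real.pi_ne_zero, neg_add_cancel, add_zero]

lemma contDiff_sine (m : ℤ) : ContDiff ℝ 2 (sine m) := by
  unfold sine
  fun_prop

lemma deriv_deriv_sine (m : ℤ) : deriv (deriv (sine m)) = fun x ↦ -(m : ℝ) ^ 2 * sine m x := by
  have hmul (x : ℝ) : HasDerivAt (fun x : ℝ ↦ m * x) m x := by
    simpa using (hasDerivAt_id x).const_mul (m : ℝ)
  have hsine : deriv (sine m) = fun x ↦ √(2 / Real.pi) * (Real.cos (m * x) * m) :=
    funext fun x ↦ ((hmul x).sin.const_mul _).deriv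
  ext x
  rw [hsine, (((hmul x).cos.mul_const _).const_mul _).deriv, sine]
  ring

lemma IsDirichletSolution.integral_sine_smul (h : IsDirichletSolution f y) (m : ℤ) :
    ∫ x in 0..Real.pi, sine m x • f x =
      -(m : ℝ) ^ 2 • ∫ x in 0..Real.pi, sine m x • y x := by
  obtain ⟨⟨g, hg, hy⟩, h0, hpi⟩ := h
  have hgf : ∫ x in 0..Real.pi, deriv (sine m) x • g x = -∫ x in 0..Real.pi, sine m x • f x := by
    simpa [sine, Real.sin_int_mul_pi] using
      hg.integral_deriv_smul ((contDiff_sine m).of_le one_le_two)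
  have hyg : -(m : ℝ) ^ 2 • ∫ x in 0..Real.pi, sine m x • y x =
      -∫ x in 0..Real.pi, deriv (sine m) x • g x := by
    simpa only [deriv_deriv_sine, mul_smul, intervalIntegral.integral_smul, h0, hpi, smul_zero,
      sub_zero, zero_sub] using hy.integral_deriv_smul (contDiff_sine m).deriv'
  rw [hyg, hgf, neg_neg]

end DirichletProblem

lemma intervalIntegrable_L2Interval (v : L2Interval) : IntervalIntegrable v volume 0 Real.pi :=
  (intervalIntegrable_iff_integrableOn_Ioc_of_le Real.pi_pos.le).mpr
    ((Lp.memLp v).integrable one_le_two)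

lemma IsDirichletSolution.inner_sineL2_eq {v w : L2Interval} {y : ℝ → ℂ}
    (h : IsDirichletSolution w y) (hv : v =ᵐ[intervalMeasure] y) (m : ℤ) :
    ⟪sineL2 m, w⟫_ℂ = -(m : ℂ) ^ 2 * ⟪sineL2 m, v⟫_ℂ := by
  rw [inner_sineL2 m (EventuallyEq.refl _ w), inner_sineL2 m hv, h.integral_sine_smul,
    Complex.real_smul]
  push_cast
  rfl

lemma exists_isDirichletSolution_iff {v w : L2Interval} :
    (∃ y : ℝ → ℂ, v =ᵐ[intervalMeasure] y ∧ IsDirichletSolution w y) ↔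
      ∀ m : ℕ+, ⟪sineL2 m, w⟫_ℂ = -(m : ℂ) ^ 2 * ⟪sineL2 m, v⟫_ℂ := by
  constructor
  · rintro ⟨y, hvy, hy⟩ m
    exact hy.inner_sineL2_eq hvy m
  · intro h
    obtain ⟨y, hy⟩ := exists_isDirichletSolution (intervalIntegrable_L2Interval w)
    have hmem := memLp_of_continuousOn_Icc hy.continuousOn
    have hv : v = hmem.toLp y := by
      refine sub_eq_zero.mp (eq_zero_of_inner_sineL2_eq_zero fun m ↦ ?_)
      have hm : -(m : ℂ) ^ 2 ≠ 0 := neg_ne_zero.mpr (pow_ne_zero 2 (Nat.cast_ne_zero.mpr m.ne_zero))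
      rw [inner_sub_right, sub_eq_zero]
      exact mul_left_cancel₀ hm ((h m).symm.trans (hy.inner_sineL2_eq hmem.coeFn_toLp m))
    exact ⟨y, hv ▸ hmem.coeFn_toLp, hy⟩

lemma ne_zero_iff_exists_Icc_ne_zero {v : L2Interval} {y : ℝ → ℂ} (hv : v =ᵐ[intervalMeasure] y)
    (hy : ContinuousOn y (Set.Icc 0 Real.pi)) : v ≠ 0 ↔ ∃ x ∈ Set.Icc 0 Real.pi, y x ≠ 0 := by
  have hzero : v = 0 ↔ Set.EqOn y 0 (Set.Icc 0 Real.pi) := by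
    rw [Lp.eq_zero_iff_ae_eq_zero]
    constructor
    · intro h
      refine Measure.eqOn_Icc_of_ae_eq volume Real.pi_ne_zero.symm ?_ hy continuousOn_const
      rw [← restrict_Ioc_eq_restrict_Icc]
      exact hv.symm.trans h
    · intro h
      filter_upwards [hv, ae_restrict_mem measurableSet_Ioc] with x hx hmem
      rw [hx, h (Set.Ioc_subset_Icc_self hmem)]
  simp only [Ne, hzero, Set.EqOn, Pi.zero_apply, not_forall, exists_prop]

open scoped ENNReal in
lemma isDirichletEV_iff_exists_inner_sineL2 {q : ℝ → ℂ} (hq : MemLp q ∞ intervalMeasure) (lam : ℂ) :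
    IsDirichletEV q lam ↔ ∃ v : L2Interval, v ≠ 0 ∧
      ∀ m : ℕ+, (lam - (m : ℂ) ^ 2) * ⟪sineL2 m, v⟫_ℂ = ⟪sineL2 m, mulOperator hq v⟫_ℂ := by
  have hpotential {v : L2Interval} {y : ℝ → ℂ} (hv : v =ᵐ[intervalMeasure] y) :
      (mulOperator hq v - lam • v : L2Interval) =ᵐ[intervalMeasure]
        fun t ↦ (q t - lam) * y t := by
    filter_upwards [Lp.coeFn_sub (mulOperator hq v) (lam • v), Lp.coeFn_smul lam v,
      coeFn_mulOperator hq v, hv] with x hsub hsmul hmul hx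
    rw [hsub, Pi.sub_apply, hsmul, Pi.smul_apply, hmul, hx, smul_eq_mul, sub_mul]
  have hcoord (v : L2Interval) (m : ℕ+) :
      (lam - (m : ℂ) ^ 2) * ⟪sineL2 m, v⟫_ℂ = ⟪sineL2 m, mulOperator hq v⟫_ℂ ↔
        ⟪sineL2 m, mulOperator hq v - lam • v⟫_ℂ = -(m : ℂ) ^ 2 * ⟪sineL2 m, v⟫_ℂ := by
    rw [inner_sub_right, inner_smul_right]
    constructor <;> intro h <;> linear_combination -h
  simp only [isDirichletEV_iff_exists_isDirichletSolution, hcoord, ← exists_isDirichletSolution_iff]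
  constructor
  · rintro ⟨y, hne, hy⟩
    have hv := (memLp_of_continuousOn_Icc hy.continuousOn).coeFn_toLp
    exact ⟨_, (ne_zero_iff_exists_Icc_ne_zero hv hy.continuousOn).mpr hne, y, hv,
      hy.congr_ae (hpotential hv).symm⟩
  · rintro ⟨v, hne, y, hv, hy⟩
    exact ⟨y, (ne_zero_iff_exists_Icc_ne_zero hv hy.continuousOn).mp hne,
      hy.congr_ae (hpotential hv)⟩

/-! ### The characteristic equation -/

section MatrixPowers

open scoped ENNReal

variable {q : ℝ → ℝ} (hq : MemLp (fun x ↦ (q x : ℂ)) ∞ intervalMeasure)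

include hq in
lemma abs_cosCoefR_le_lpNorm (k : ℤ) :
    |cosCoefR q k| ≤ lpNorm (fun x ↦ (q x : ℂ)) ∞ intervalMeasure :=
  abs_cosCoefR_le (by simpa using ae_le_lpNorm_exponent_top hq) k

variable {S : L2Interval →L[ℂ] L2Interval} {s : ℤ → ℝ} (hs : Summable fun l ↦ ‖s l‖)
  (hneg : ∀ l, s (-l) = s l)
  (hS : ∀ (v : L2Interval) (l : ℕ+), ⟪sineL2 l, S v⟫_ℂ = s l * ⟪sineL2 l, v⟫_ℂ)

include hq hs in
lemma summable_cosCoefR_mul_inner_sineL2 (m : ℤ) (v : L2Interval) :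
    Summable fun l : ℤ ↦ (cosCoefR q (m - l) : ℂ) * s l * ⟪sineL2 l, v⟫_ℂ := by
  set B := lpNorm (fun x ↦ (q x : ℂ)) ∞ intervalMeasure
  refine .of_norm_bounded ((hs.mul_left B).mul_right ‖v‖) fun l ↦ ?_
  rw [norm_mul, norm_mul, Complex.norm_real, Complex.norm_real, Real.norm_eq_abs (cosCoefR q _)]
  refine mul_le_mul (mul_le_mul_of_nonneg_right ?_ (norm_nonneg _)) ?_ (norm_nonneg _) ?_
  · exact abs_cosCoefR_le_lpNorm hq _
  · exact (norm_inner_le_norm _ _).trans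
      (mul_le_of_le_one_left (norm_nonneg v) (norm_sineL2_le_one l))
  · exact mul_nonneg lpNorm_nonneg (norm_nonneg _)

include hs hneg hS in
/- In the basis only `l ≥ 1` occurs, with matrix entry `C (m - l) - C (m + l)`; by oddness of
`sineL2` the second term is the contribution of `-l` to a convolution over all of `ℤ`. -/
lemma inner_sineL2_mulOperator_apply (m : ℤ) (v : L2Interval) :
    ⟪sineL2 m, mulOperator hq (S v)⟫_ℂ =
      ∑' l : ℤ, (cosCoefR q l : ℂ) * s (m + l) * ⟪sineL2 (m + l), v⟫_ℂ := by
  set f : ℤ → ℂ := fun l ↦ (cosCoefR q (m - l) : ℂ) * s l * ⟪sineL2 l, v⟫_ℂ with hf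
  have hfsum : Summable f := summable_cosCoefR_mul_inner_sineL2 hq hs m v
  have hfold (l : ℕ+) : f l + f (-l) = s l * ⟪sineL2 l, v⟫_ℂ *
      ⟪sineL2 m, mulOperator hq (sineL2 l)⟫_ℂ := by
    simp only [hf, inner_sineL2_mulOperator_sineL2, sineL2_neg, inner_neg_left, hneg,
      sub_neg_eq_add, Complex.ofReal_sub]
    ring
  have hexpand := (sineBasis.hasSum_repr (S v)).mapL (innerSL ℂ (sineL2 m) ∘L mulOperator hq)
  simp only [map_smul, ContinuousLinearMap.comp_apply, innerSL_apply_apply, smul_eq_mul,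
    sineBasis.repr_apply_apply, sineBasis_apply, hS, ← hfold] at hexpand
  have hpos : Summable fun l : ℕ+ ↦ f l :=
    hfsum.comp_injective (Nat.cast_injective.comp PNat.coe_injective)
  have hnegsum : Summable fun l : ℕ+ ↦ f (-l) :=
    hfsum.comp_injective (neg_injective.comp (Nat.cast_injective.comp PNat.coe_injective))
  have hzero : f 0 = 0 := by
    simp only [hf, sineL2_zero, inner_zero_left, mul_zero]
  calc ⟪sineL2 m, mulOperator hq (S v)⟫_ℂ = ∑' l : ℕ+, (f l + f (-l)) := hexpand.tsum_eq.symm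
    _ = ∑' l : ℤ, f l := by
      rw [tsum_int_eq_zero_add_tsum_pnat hfsum, hzero, zero_add, hpos.tsum_add hnegsum]
    _ = ∑' l : ℤ, f (m + l) := ((Equiv.addLeft m).tsum_eq f).symm
    _ = ∑' l : ℤ, (cosCoefR q l : ℂ) * s (m + l) * ⟪sineL2 (m + l), v⟫_ℂ := by
      simp only [hf, sub_add_cancel_left, cosCoefR_neg]

include hs hneg hS in
lemma inner_sineL2_mulOperator_pow_apply (n : ℤ) (k : ℕ) (m : ℤ) :
    ⟪sineL2 m, mulOperator hq (((S * mulOperator hq) ^ k) (sineL2 n))⟫_ℂ =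
      ((∑' v : Fin k → ℤ, pathWeight (cosCoefR q) s n m v : ℝ) : ℂ) := by
  induction k generalizing m with
  | zero =>
    simp only [pow_zero, one_apply_eq_self, inner_sineL2_mulOperator_sineL2,
      pathWeight_fin_zero, tsum_fintype, Finset.univ_unique, Finset.sum_singleton]
  | succ k ih =>
    rw [pow_succ', tsum_pathWeight_succ (abs_cosCoefR_le_lpNorm hq) hs, Complex.ofReal_tsum]
    refine (inner_sineL2_mulOperator_apply hq hs hneg hS m _).trans (tsum_congr fun l ↦ ?_)
    rw [Complex.ofReal_mul, Complex.ofReal_mul, ← ih]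
    rfl

end MatrixPowers

lemma aSum_zero (C : ℤ → ℝ) (n : ℕ) (lam : ℝ) : aSum C n 0 lam = C 0 - C (2 * n) := by
  simp [aSum, aTerm_eq_pathWeight, pathWeight_fin_zero, two_mul]

lemma exists_forall_norm_reducedResolvent_le {M : ℝ} (hM : 0 ≤ M) {n : ℕ+} {lam : ℝ}
    (hgap : ∀ m : ℕ+, m ≠ n → M < |lam - (m : ℝ) ^ 2|) :
    ∃ K, 0 ≤ K ∧ K * M < 1 ∧ ∀ l : ℕ+, ‖reducedResolvent n lam l‖ ≤ K := by
  have htendsto : Tendsto (fun l : ℕ+ ↦ |lam - (l : ℝ) ^ 2|) cofinite atTop := by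
    simp only [abs_sub_comm lam]
    exact tendsto_abs_atTop_atTop.comp ((tendsto_sq_sub_atTop lam).comp
      (Nat.cast_injective.comp PNat.coe_injective).tendsto_cofinite)
  obtain ⟨m, hm, hmin⟩ := htendsto.exists_within_forall_le (s := {n}ᶜ) 
    ⟨n + 1, (PNat.lt_add_right n 1).ne'⟩
  have hpos : 0 < |lam - (m : ℝ) ^ 2| := hM.trans_lt (hgap m hm)
  refine ⟨|lam - (m : ℝ) ^ 2|⁻¹, by positivity, ?_, fun l ↦ ?_⟩
  · rw [inv_mul_lt_one₀ hpos]
    exact hgap m hm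
  · rcases eq_or_ne l n with rfl | hl
    · rw [reducedResolvent_self, norm_zero]
      positivity
    · rw [reducedResolvent_of_ne hl, norm_inv, Real.norm_eq_abs]
      exact inv_anti₀ hpos (hmin l hl)

lemma exists_inner_sineL2_apply_eq_reducedResolvent {M : ℝ} (hM : 0 ≤ M) {n : ℕ+} {lam : ℝ}
    (hgap : ∀ m : ℕ+, m ≠ n → M < |lam - (m : ℝ) ^ 2|) :
    ∃ S : L2Interval →L[ℂ] L2Interval, ‖S‖ * M < 1 ∧
      ∀ v (l : ℕ+), ⟪sineL2 l, S v⟫_ℂ = reducedResolvent n lam l * ⟪sineL2 l, v⟫_ℂ := by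
  obtain ⟨K, hK, hKM, hsK⟩ := exists_forall_norm_reducedResolvent_le hM hgap
  have hsK' (l : ℕ+) : ‖(reducedResolvent n lam l : ℂ)‖ ≤ K := by
    rw [Complex.norm_real]
    exact hsK l
  refine ⟨diagonalOperator sineBasis hK hsK', ?_, fun v l ↦ ?_⟩
  · exact (mul_le_mul_of_nonneg_right (norm_diagonalOperator_le sineBasis hK hsK') hM).trans_lt hKM
  · rw [← sineBasis_apply, inner_diagonalOperator]

open scoped ENNReal in
lemma isDirichletEV_iff_tsum_aSum {q : ℝ → ℝ} (hq : MemLp (fun x ↦ (q x : ℂ)) ∞ intervalMeasure)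
    {n : ℕ+} {lam : ℝ} (hlam : ∀ m : ℕ+, m ≠ n → lam ≠ (m : ℝ) ^ 2)
    {S : L2Interval →L[ℂ] L2Interval} (hSQ : ‖S * mulOperator hq‖ < 1)
    (hS : ∀ v (l : ℕ+), ⟪sineL2 l, S v⟫_ℂ = reducedResolvent n lam l * ⟪sineL2 l, v⟫_ℂ) :
    (Summable fun k ↦ aSum (cosCoefR q) n k lam) ∧
      (IsDirichletEV (fun x ↦ (q x : ℂ)) lam ↔
        ∑' k, aSum (cosCoefR q) n k lam = lam - (n : ℝ) ^ 2) := by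
  have hterm (k : ℕ) :
      ⟪sineL2 n, mulOperator hq (((S * mulOperator hq) ^ k) (sineL2 n))⟫_ℂ =
        (aSum (cosCoefR q) n k lam : ℂ) := by
    simp only [aSum, aTerm_eq_pathWeight]
    exact inner_sineL2_mulOperator_pow_apply hq (summable_norm_reducedResolvent n lam)
      (reducedResolvent_neg n lam) hS n k n
  have hsum := (hasSum_dual_pow_apply hSQ (innerSL ℂ (sineL2 n) ∘L mulOperator hq)
    (sineL2 n)).summable
  simp only [ContinuousLinearMap.comp_apply, innerSL_apply_apply, hterm] at hsum
  refine ⟨Complex.summable_ofReal.mp hsum, ?_⟩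
  have hself : (reducedResolvent n lam n : ℂ) = 0 := by
    rw [reducedResolvent_self, Complex.ofReal_zero]
  have hinv (l : ℕ+) (hl : l ≠ n) :
      (reducedResolvent n lam l : ℂ) * ((lam : ℂ) - (l : ℂ) ^ 2) = 1 := by
    rw [reducedResolvent_of_ne hl]
    exact_mod_cast inv_mul_cancel₀ (sub_ne_zero.mpr (hlam l hl))
  have hschur := exists_forall_mul_inner_eq_iff_tsum_eq sineBasis (Q := mulOperator hq) (S := S)
    (by simpa only [sineBasis_apply] using hS) hself hinv hSQ
  simp only [sineBasis_apply, hterm, ← Complex.ofReal_tsum] at hschur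
  rw [isDirichletEV_iff_exists_inner_sineL2 hq, hschur]
  norm_cast

theorem stmt2_general {q : ℝ → ℝ} {M : ℝ} (hq : AEStronglyMeasurable q intervalMeasure)
    (hqM : ∀ᵐ x ∂intervalMeasure, |q x| ≤ M) {n : ℕ+} {lam : ℝ}
    (hgap : ∀ m : ℕ+, m ≠ n → M < |lam - (m : ℝ) ^ 2|) :
    IsDirichletEV (fun x ↦ (q x : ℂ)) lam ↔
      (Summable fun k ↦ aSum (cosCoefR q) n (k + 1) lam) ∧
        lam - (n : ℝ) ^ 2 - cosCoefR q 0 + cosCoefR q (2 * n) -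
          ∑' k, aSum (cosCoefR q) n (k + 1) lam = 0 := by
  have hM : 0 ≤ M := (abs_nonneg _).trans (abs_cosCoefR_le hqM 0)
  have hqM' : ∀ᵐ x ∂intervalMeasure, ‖(q x : ℂ)‖ ≤ M := by simpa using hqM
  have hqL := memLp_top_of_bound (Complex.continuous_ofReal.comp_aestronglyMeasurable hq) M hqM'
  obtain ⟨S, hSM, hS⟩ := exists_inner_sineL2_apply_eq_reducedResolvent hM hgap
  have hSQ : ‖S * mulOperator hqL‖ < 1 := calc
    ‖S * mulOperator hqL‖ ≤ ‖S‖ * ‖mulOperator hqL‖ := norm_mul_le _ _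
    _ ≤ ‖S‖ * M := by
      gcongr
      exact norm_mulOperator_le hqL hM hqM'
    _ < 1 := hSM
  have hlam (m : ℕ+) (hm : m ≠ n) : lam ≠ (m : ℝ) ^ 2 :=
    sub_ne_zero.mp (abs_pos.mp (hM.trans_lt (hgap m hm)))
  obtain ⟨hsum, hiff⟩ := isDirichletEV_iff_tsum_aSum hqL hlam hSQ hS
  rw [hiff, hsum.tsum_eq_zero_add, aSum_zero, and_iff_right ((summable_nat_add_iff 1).mpr hsum)]
  constructor <;> intro h <;> linarith

/-! ### Kronig–Penney potentials -/

lemma Cond1.lt_abs_sub_sq {M lam : ℝ} {n : ℕ+} (h : Cond1 M n)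
    (hlam : lam ∈ Set.Icc ((n : ℝ) ^ 2 - M) ((n : ℝ) ^ 2 + M)) {m : ℕ+} (hmn : m ≠ n) :
    M < |lam - (m : ℝ) ^ 2| := by
  obtain ⟨hone, hlt⟩ := h
  obtain ⟨hlow, hup⟩ := hlam
  have hm : (1 : ℝ) ≤ m := mod_cast m.pos
  rcases hmn.lt_or_gt with hmn | hmn
  · have hmn' : (m : ℝ) + 1 ≤ n := mod_cast hmn
    have hM := hlt (mod_cast one_le.trans_lt hmn)
    exact lt_abs.mpr (.inl (by nlinarith))
  · have hmn' : (n : ℝ) + 1 ≤ m := mod_cast hmn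
    have hM : M < (2 * (n : ℝ) + 1) / 2 := by
      rcases (one_le (a := n)).eq_or_lt with rfl | hn
      · have := hone rfl
        norm_num
        linarith
      · have := hlt (mod_cast hn)
        linarith
    exact lt_abs.mpr (.inr (by nlinarith))

section TwoStep

variable {q : ℝ → ℝ} {a b c : ℝ}

lemma ae_eq_ite_of_forall_eq (hqa : ∀ x ∈ Set.Icc 0 c, q x = a)
    (hqb : ∀ x ∈ Set.Ioc c Real.pi, q x = b) :
    q =ᵐ[intervalMeasure] fun x ↦ if x ≤ c then a else b := by
  filter_upwards [ae_restrict_mem measurableSet_Ioc] with x hx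
  split_ifs with hxc
  · exact hqa x ⟨hx.1.le, hxc⟩
  · exact hqb x ⟨not_le.mp hxc, hx.2⟩

lemma aestronglyMeasurable_of_forall_eq (hqa : ∀ x ∈ Set.Icc 0 c, q x = a)
    (hqb : ∀ x ∈ Set.Ioc c Real.pi, q x = b) : AEStronglyMeasurable q intervalMeasure :=
  (Measurable.ite measurableSet_Iic measurable_const measurable_const).aestronglyMeasurable.congr
    (ae_eq_ite_of_forall_eq hqa hqb).symm

lemma ae_abs_le_max_of_forall_eq (hqa : ∀ x ∈ Set.Icc 0 c, q x = a)
    (hqb : ∀ x ∈ Set.Ioc c Real.pi, q x = b) :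
    ∀ᵐ x ∂intervalMeasure, |q x| ≤ max |a| |b| := by
  filter_upwards [ae_eq_ite_of_forall_eq hqa hqb] with x hx
  rw [hx]
  split_ifs
  exacts [le_max_left _ _, le_max_right _ _]

lemma cosCoefR_zero_of_forall_eq (hc : c ∈ Set.Ioo 0 Real.pi) (hqa : ∀ x ∈ Set.Icc 0 c, q x = a)
    (hqb : ∀ x ∈ Set.Ioc c Real.pi, q x = b) :
    cosCoefR q 0 = (c * a + (Real.pi - c) * b) / Real.pi := by
  have hleft : Set.EqOn (fun _ ↦ a) q (Set.uIoc 0 c) := fun x hx ↦ by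
    rw [Set.uIoc_of_le hc.1.le] at hx
    exact (hqa x (Set.Ioc_subset_Icc_self hx)).symm
  have hright : Set.EqOn (fun _ ↦ b) q (Set.uIoc c Real.pi) := fun x hx ↦ by
    rw [Set.uIoc_of_le hc.2.le] at hx
    exact (hqb x hx).symm
  have hint : ∫ x in (0 : ℝ)..Real.pi, q x = c * a + (Real.pi - c) * b := by
    rw [← intervalIntegral.integral_add_adjacent_intervals
      (intervalIntegrable_const.congr hleft) (intervalIntegrable_const.congr hright),
      ← intervalIntegral.integral_congr_uIoo (hleft.mono Set.Ioo_subset_Ioc_self),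
      ← intervalIntegral.integral_congr_uIoo (hright.mono Set.Ioo_subset_Ioc_self)]
    simp
  simp [cosCoefR, hint, div_eq_inv_mul]

end TwoStep

/-- Let `q` be the Kronig–Penney potential, `n ≥ 1`, and assume
Condition 1 holds. Then `λ ∈ I_n = [n² − M, n² + M]` is a Dirichlet eigenvalue of `L(q)`
if and only if the series `Σ_{k=1}^∞ a_k(λ)` converges and
`λ − n² + C_{2n} − Σ_{k=1}^∞ a_k(λ) = 0`. -/
theorem stmt2
    (a b c : ℝ) (q : ℝ → ℝ)
    (hc : c ∈ Set.Ioo (0:ℝ) Real.pi) (ha : a < 0) (hb : 0 < b)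
    (habc : (b - a) * c = b * Real.pi)
    (hqa : ∀ x ∈ Set.Icc (0:ℝ) c, q x = a)
    (hqb : ∀ x ∈ Set.Ioc c Real.pi, q x = b)
    (n : ℕ) (hn : 1 ≤ n) (hcond : Cond1 (max |a| b) n)
    (lam : ℝ)
    (hlam : lam ∈ Set.Icc ((n : ℝ)^2 - max |a| b) ((n : ℝ)^2 + max |a| b)) :
    IsDirichletEV (fun x => (q x : ℂ)) (lam : ℂ) ↔
      (Summable (fun k : ℕ => aSum (cosCoefR q) n (k + 1) lam) ∧
        lam - (n : ℝ)^2 + cosCoefR q (2 * n) -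
          (∑' k : ℕ, aSum (cosCoefR q) n (k + 1) lam) = 0) := by
  have hbound := ae_abs_le_max_of_forall_eq hqa hqb
  have hmean : cosCoefR q 0 = 0 := by
    rw [cosCoefR_zero_of_forall_eq hc hqa hqb, show c * a + (Real.pi - c) * b = 0 by linarith,
      zero_div]
  rw [abs_of_pos hb] at hbound
  lift n to ℕ+ using hn
  simpa only [hmean, sub_zero] using stmt2_general
    (aestronglyMeasurable_of_forall_eq hqa hqb) hbound fun m hm ↦ hcond.lt_abs_sub_sq hlam hm
end

section
/- If q belongs to the class E, then S_j(n,q) = O(1/n) as n → ∞ for j = 2, 3, 4, where (all sums being over pairs (k,l) ∈ ℤ² with k ∉ {0, −2n} and k + l ∉ {0, −2n}): S_2(n,q) = Σ C_k C_l C_{−k−l} / ( (2n+k)(k+l) ), S_3(n,q) = Σ C_k C_l C_{−k−l} / ( k(2n+k+l) ), and S_4(n,q) = Σ C_k C_l C_{−k−l} / ( (2n+k)(2n+k+l) ). -/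
open MeasureTheory Filter Asymptotics

/-- Cosine Fourier coefficients `C_k = (1/π) ∫₀^π q(x) cos(kx) dx`. -/
noncomputable def cosCoef (q : ℝ → ℂ) (k : ℤ) : ℂ :=
  (1 / (Real.pi : ℂ)) * ∫ x in (0:ℝ)..Real.pi, q x * Real.cos ((k : ℝ) * x)

/-- The restriction set for the sums `S_j(n,q)`: pairs `(k,l)` with `k ∉ {0, −2n}` and
`k+l ∉ {0, −2n}`. -/
def Sadm (n : ℕ) (kl : ℤ × ℤ) : Prop :=
  kl.1 ≠ 0 ∧ kl.1 ≠ -(2 * (n : ℤ)) ∧ kl.1 + kl.2 ≠ 0 ∧ kl.1 + kl.2 ≠ -(2 * (n : ℤ))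

instance (n : ℕ) (kl : ℤ × ℤ) : Decidable (Sadm n kl) := by unfold Sadm; infer_instance

/-- `S₂(n,q) = Σ C_k C_l C_{−k−l} / ((2n+k)(k+l))`. -/
noncomputable def S2sum (q : ℝ → ℂ) (n : ℕ) : ℂ :=
  ∑' kl : ℤ × ℤ, if Sadm n kl then
    cosCoef q kl.1 * cosCoef q kl.2 * cosCoef q (-(kl.1 + kl.2)) /
      ((2 * (n : ℂ) + (kl.1 : ℂ)) * ((kl.1 : ℂ) + (kl.2 : ℂ)))
  else 0

/-- `S₃(n,q) = Σ C_k C_l C_{−k−l} / (k(2n+k+l))`. -/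
noncomputable def S3sum (q : ℝ → ℂ) (n : ℕ) : ℂ :=
  ∑' kl : ℤ × ℤ, if Sadm n kl then
    cosCoef q kl.1 * cosCoef q kl.2 * cosCoef q (-(kl.1 + kl.2)) /
      ((kl.1 : ℂ) * (2 * (n : ℂ) + (kl.1 : ℂ) + (kl.2 : ℂ)))
  else 0

/-- `S₄(n,q) = Σ C_k C_l C_{−k−l} / ((2n+k)(2n+k+l))`. -/
noncomputable def S4sum (q : ℝ → ℂ) (n : ℕ) : ℂ :=
  ∑' kl : ℤ × ℤ, if Sadm n kl then
    cosCoef q kl.1 * cosCoef q kl.2 * cosCoef q (-(kl.1 + kl.2)) /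
      ((2 * (n : ℂ) + (kl.1 : ℂ)) * (2 * (n : ℂ) + (kl.1 : ℂ) + (kl.2 : ℂ)))
  else 0

/-!
By AM-GM, `x y z ≤ ((x y)^(3/2) + (y z)^(3/2) + (x z)^(3/2)) / 3`, and each of the three products
becomes a product of functions of independent variables after a shear of `ℤ × ℤ`. This is Young's
inequality for the exponents `3/2, 3/2, 3/2`: it bounds `∑ f(k) g(l) h(k+l)` through
`∑ |f|^(3/2)`, `∑ |g|^(3/2)` and `∑ |h|^(3/2)`, so for translates of `|k|⁻¹` the bound does not
depend on the translations.

If `C_k = O(1/k)`, the summand `C_k C_l C_{-k-l} / ((k+a)(k+l+b))` has two factors more than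
Young's inequality needs. The triangle inequality for `k⁻¹ - (k+a)⁻¹` gives
`|a| |k|⁻¹ |k+a|⁻¹ ≤ |k|⁻¹ + |k+a|⁻¹`, so one of them can be traded for a factor `1/|a|`;
symmetrically, the other one yields `1/|b|`. The sums `S₂, S₃, S₄` are the cases
`(a, b) = (2n, 0), (0, 2n), (2n, 2n)`.
-/

section Young

theorem mul_mul_le_rpow_three_halves {x y z : ℝ} (hx : 0 ≤ x) (hy : 0 ≤ y) (hz : 0 ≤ z) :
    x * y * z ≤
      ((x * y) ^ (3 / 2 : ℝ) + (y * z) ^ (3 / 2 : ℝ) + (x * z) ^ (3 / 2 : ℝ)) / 3 := by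
  have rpow_third {t : ℝ} (ht : 0 ≤ t) : (t ^ (3 / 2 : ℝ)) ^ (1 / 3 : ℝ) = √t := by
    rw [← Real.rpow_mul ht, Real.sqrt_eq_rpow]
    norm_num
  calc x * y * z = √((x * y * z) ^ 2) := (Real.sqrt_sq (by positivity)).symm
    _ = √(x * y) * √(y * z) * √(x * z) := by
      rw [← Real.sqrt_mul (by positivity), ← Real.sqrt_mul (by positivity)]
      ring_nf
    _ = ((x * y) ^ (3 / 2 : ℝ)) ^ (1 / 3 : ℝ) * ((y * z) ^ (3 / 2 : ℝ)) ^ (1 / 3 : ℝ) *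
          ((x * z) ^ (3 / 2 : ℝ)) ^ (1 / 3 : ℝ) := by
      rw [rpow_third (by positivity), rpow_third (by positivity), rpow_third (by positivity)]
    _ ≤ 1 / 3 * (x * y) ^ (3 / 2 : ℝ) + 1 / 3 * (y * z) ^ (3 / 2 : ℝ) +
          1 / 3 * (x * z) ^ (3 / 2 : ℝ) :=
      Real.geom_mean_le_arith_mean3_weighted (by norm_num) (by norm_num) (by norm_num)
        (by positivity) (by positivity) (by positivity) (by norm_num)
    _ = _ := by ring

theorem hasSum_mul_rpow {ι κ : Type*} {f : ι → ℝ} {g : κ → ℝ} {r F G : ℝ}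
    (hf : ∀ i, 0 ≤ f i) (hg : ∀ j, 0 ≤ g j)
    (hF : HasSum (fun i => f i ^ r) F) (hG : HasSum (fun j => g j ^ r) G) :
    HasSum (fun p : ι × κ => (f p.1 * g p.2) ^ r) (F * G) := by
  simp only [Real.mul_rpow (hf _) (hg _)]
  exact hF.mul hG <| hF.summable.mul_of_nonneg hG.summable
    (fun i => Real.rpow_nonneg (hf i) r) (fun j => Real.rpow_nonneg (hg j) r)

variable {Γ : Type*} [AddGroup Γ] {f g h : Γ → ℝ} {F G H : ℝ}

theorem hasSum_young_majorant (hf : ∀ x, 0 ≤ f x) (hg : ∀ x, 0 ≤ g x) (hh : ∀ x, 0 ≤ h x)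
    (hF : HasSum (fun x => f x ^ (3 / 2 : ℝ)) F) (hG : HasSum (fun x => g x ^ (3 / 2 : ℝ)) G)
    (hH : HasSum (fun x => h x ^ (3 / 2 : ℝ)) H) :
    HasSum (fun p : Γ × Γ => ((f p.1 * g p.2) ^ (3 / 2 : ℝ) +
      (g p.2 * h (p.1 + p.2)) ^ (3 / 2 : ℝ) + (f p.1 * h (p.1 + p.2)) ^ (3 / 2 : ℝ)) / 3)
      ((F * G + G * H + F * H) / 3) := by
  let snd_add : Γ × Γ ≃ Γ × Γ :=
    (Equiv.prodComm Γ Γ).trans (Equiv.prodShear (Equiv.refl Γ) Equiv.addRight)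
  let fst_add : Γ × Γ ≃ Γ × Γ := Equiv.prodShear (Equiv.refl Γ) Equiv.addLeft
  exact (((hasSum_mul_rpow hf hg hF hG).add
    (snd_add.hasSum_iff.mpr (hasSum_mul_rpow hg hh hG hH))).add
    (fst_add.hasSum_iff.mpr (hasSum_mul_rpow hf hh hF hH))).div_const 3

theorem summable_mul_mul_add (hf : ∀ x, 0 ≤ f x) (hg : ∀ x, 0 ≤ g x) (hh : ∀ x, 0 ≤ h x)
    (hF : Summable fun x => f x ^ (3 / 2 : ℝ)) (hG : Summable fun x => g x ^ (3 / 2 : ℝ))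
    (hH : Summable fun x => h x ^ (3 / 2 : ℝ)) :
    Summable fun p : Γ × Γ => f p.1 * g p.2 * h (p.1 + p.2) :=
  (hasSum_young_majorant hf hg hh hF.hasSum hG.hasSum hH.hasSum).summable.of_nonneg_of_le
    (fun _ => mul_nonneg (mul_nonneg (hf _) (hg _)) (hh _))
    (fun _ => mul_mul_le_rpow_three_halves (hf _) (hg _) (hh _))

theorem tsum_mul_mul_add_le (hf : ∀ x, 0 ≤ f x) (hg : ∀ x, 0 ≤ g x) (hh : ∀ x, 0 ≤ h x)
    (hF : HasSum (fun x => f x ^ (3 / 2 : ℝ)) F) (hG : HasSum (fun x => g x ^ (3 / 2 : ℝ)) G)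
    (hH : HasSum (fun x => h x ^ (3 / 2 : ℝ)) H) :
    ∑' p : Γ × Γ, f p.1 * g p.2 * h (p.1 + p.2) ≤ (F * G + G * H + F * H) / 3 :=
  hasSum_le (fun _ => mul_mul_le_rpow_three_halves (hf _) (hg _) (hh _))
    (summable_mul_mul_add hf hg hh hF.summable hG.summable hH.summable).hasSum
    (hasSum_young_majorant hf hg hh hF hG hH)

end Young

/-- The weight `|k|⁻¹` on the integers, equal to `0` at `k = 0`; it measures the decay
`C_k = O(1/k)`, `C₀ = 0`. -/
noncomputable def absInv (k : ℤ) : ℝ := |(k : ℝ)|⁻¹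

theorem absInv_nonneg (k : ℤ) : 0 ≤ absInv k := by
  unfold absInv
  positivity

theorem absInv_neg (k : ℤ) : absInv (-k) = absInv k := by
  simp [absInv]

theorem absInv_le_one (k : ℤ) : absInv k ≤ 1 := by
  obtain rfl | hk := eq_or_ne k 0
  · simp [absInv]
  · exact inv_le_one_of_one_le₀ (mod_cast Int.one_le_abs hk)

theorem summable_absInv_rpow {r : ℝ} (hr : 1 < r) : Summable fun k => absInv k ^ r := by
  simpa only [absInv, Real.inv_rpow (abs_nonneg _), ← Real.rpow_neg (abs_nonneg _)] using
    Real.summable_abs_int_rpow hr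

theorem hasSum_absInv_add_rpow {r : ℝ} (hr : 1 < r) (a : ℤ) :
    HasSum (fun k => absInv (k + a) ^ r) (∑' k, absInv k ^ r) :=
  (Equiv.addRight a).hasSum_iff.mpr (summable_absInv_rpow hr).hasSum

theorem norm_sub_mul_norm_inv_le {𝕜 : Type*} [NormedDivisionRing 𝕜] (x y : 𝕜) :
    ‖y - x‖ * (‖x‖⁻¹ * ‖y‖⁻¹) ≤ ‖x‖⁻¹ + ‖y‖⁻¹ := by
  obtain rfl | hx := eq_or_ne x 0
  · simp
  obtain rfl | hy := eq_or_ne y 0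
  · simp
  calc ‖y - x‖ * (‖x‖⁻¹ * ‖y‖⁻¹) = ‖x⁻¹ - y⁻¹‖ := by
        rw [inv_sub_inv' hx hy, norm_mul, norm_mul, norm_inv, norm_inv]
        ring
    _ ≤ ‖x‖⁻¹ + ‖y‖⁻¹ := by simpa only [norm_inv] using norm_sub_le x⁻¹ y⁻¹

theorem abs_mul_absInv_mul_absInv_add_le (k a : ℤ) :
    |(a : ℝ)| * (absInv k * absInv (k + a)) ≤ absInv k + absInv (k + a) := by
  simpa [absInv] using norm_sub_mul_norm_inv_le (k : ℝ) ((k + a : ℤ) : ℝ)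

/-- The kernel `|k+a|⁻¹ |l|⁻¹ |k+l+b|⁻¹` at `p = (k, l)`, the majorant to which Young's inequality
is applied. -/
noncomputable def tripleWeight (a b : ℤ) (p : ℤ × ℤ) : ℝ :=
  absInv (p.1 + a) * absInv p.2 * absInv (p.1 + p.2 + b)

theorem tripleWeight_nonneg (a b : ℤ) (p : ℤ × ℤ) : 0 ≤ tripleWeight a b p :=
  mul_nonneg (mul_nonneg (absInv_nonneg _) (absInv_nonneg _)) (absInv_nonneg _)

theorem summable_tripleWeight (a b : ℤ) : Summable (tripleWeight a b) :=
  summable_mul_mul_add (f := fun k => absInv (k + a)) (h := fun k => absInv (k + b))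
    (fun _ => absInv_nonneg _) absInv_nonneg (fun _ => absInv_nonneg _)
    (hasSum_absInv_add_rpow (by norm_num) a).summable (summable_absInv_rpow (by norm_num))
    (hasSum_absInv_add_rpow (by norm_num) b).summable

theorem tsum_tripleWeight_le (a b : ℤ) :
    ∑' p, tripleWeight a b p ≤ (∑' k, absInv k ^ (3 / 2 : ℝ)) ^ 2 :=
  (tsum_mul_mul_add_le (f := fun k => absInv (k + a)) (h := fun k => absInv (k + b))
    (fun _ => absInv_nonneg _) absInv_nonneg (fun _ => absInv_nonneg _)
    (hasSum_absInv_add_rpow (by norm_num) a) (summable_absInv_rpow (by norm_num)).hasSum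
    (hasSum_absInv_add_rpow (by norm_num) b)).trans_eq (by ring)

theorem abs_mul_tripleWeight_mul_le_left (a b : ℤ) (p : ℤ × ℤ) :
    |(a : ℝ)| * (tripleWeight 0 0 p * (absInv (p.1 + a) * absInv (p.1 + p.2 + b))) ≤
      tripleWeight 0 0 p + tripleWeight a 0 p := by
  obtain ⟨k, l⟩ := p
  simp only [tripleWeight, add_zero]
  have hl := absInv_nonneg l
  have hkl := absInv_nonneg (k + l)
  have hk := absInv_nonneg k
  have hka := absInv_nonneg (k + a)
  have hklb := absInv_nonneg (k + l + b)
  calc _ = |(a : ℝ)| * (absInv k * absInv (k + a)) * (absInv l * absInv (k + l)) *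
          absInv (k + l + b) := by ring
    _ ≤ (absInv k + absInv (k + a)) * (absInv l * absInv (k + l)) * 1 := by
      gcongr
      · exact abs_mul_absInv_mul_absInv_add_le k a
      · exact absInv_le_one _
    _ = _ := by ring

theorem abs_mul_tripleWeight_mul_le_right (a b : ℤ) (p : ℤ × ℤ) :
    |(b : ℝ)| * (tripleWeight 0 0 p * (absInv (p.1 + a) * absInv (p.1 + p.2 + b))) ≤
      tripleWeight 0 0 p + tripleWeight 0 b p := by
  -- The substitution `(k, l) ↦ (k + l, -l)` exchanges the roles of `a` and `b`.
  have hswap := abs_mul_tripleWeight_mul_le_left b a (p.1 + p.2, -p.2)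
  simp only [tripleWeight, absInv_neg, add_neg_cancel_right, add_zero] at hswap ⊢
  linarith

theorem max_abs_mul_tripleWeight_mul_le (a b : ℤ) (p : ℤ × ℤ) :
    max |(a : ℝ)| |(b : ℝ)| *
        (tripleWeight 0 0 p * (absInv (p.1 + a) * absInv (p.1 + p.2 + b))) ≤
      tripleWeight 0 0 p + tripleWeight a 0 p + tripleWeight 0 b p := by
  obtain hmax | hmax := max_choice |(a : ℝ)| |(b : ℝ)| <;> rw [hmax]
  · linarith [abs_mul_tripleWeight_mul_le_left a b p, tripleWeight_nonneg 0 b p]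
  · linarith [abs_mul_tripleWeight_mul_le_right a b p, tripleWeight_nonneg a 0 p]

section TripleSum

variable {𝕜 : Type*} [RCLike 𝕜] {C : ℤ → 𝕜} {M : ℝ}

/-- The summand `C_k C_l C_{-k-l} / ((k+a)(k+l+b))` at `p = (k, l)`, which covers the summands of
`S₂`, `S₃`, `S₄` by a choice of the shifts `a`, `b`. It is `0` where the denominator vanishes. -/
def tripleTerm (C : ℤ → 𝕜) (a b : ℤ) (p : ℤ × ℤ) : 𝕜 :=
  C p.1 * C p.2 * C (-(p.1 + p.2)) / (((p.1 + a : ℤ) : 𝕜) * ((p.1 + p.2 + b : ℤ) : 𝕜))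

/-- The sum of `C_k C_l C_{-k-l} / ((k+a)(k+l+b))` over the pairs `(k, l)` in `A`. -/
noncomputable def tripleSum (C : ℤ → 𝕜) (A : Set (ℤ × ℤ)) (a b : ℤ) : 𝕜 :=
  ∑' p, A.indicator (tripleTerm C a b) p

theorem norm_tripleTerm_le (hC : ∀ k, ‖C k‖ ≤ M * absInv k) (a b : ℤ) (p : ℤ × ℤ) :
    ‖tripleTerm C a b p‖ ≤
      M ^ 3 * (tripleWeight 0 0 p * (absInv (p.1 + a) * absInv (p.1 + p.2 + b))) := by
  have norm_inv_intCast (k : ℤ) : ‖(k : 𝕜)⁻¹‖ = absInv k := by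
    rw [absInv, norm_inv, ← RCLike.ofReal_intCast, RCLike.norm_ofReal]
  obtain ⟨k, l⟩ := p
  have hl := (norm_nonneg _).trans (hC l)
  have hk := (norm_nonneg _).trans (hC k)
  calc ‖tripleTerm C a b (k, l)‖
      = ‖C k‖ * ‖C l‖ * ‖C (-(k + l))‖ * (absInv (k + a) * absInv (k + l + b)) := by
        simp only [tripleTerm, norm_mul, div_eq_mul_inv, mul_inv, norm_inv_intCast]
    _ ≤ (M * absInv k) * (M * absInv l) * (M * absInv (k + l)) *
          (absInv (k + a) * absInv (k + l + b)) := by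
        have hw := mul_nonneg (absInv_nonneg (k + a)) (absInv_nonneg (k + l + b))
        gcongr
        · exact hC k
        · exact hC l
        · exact (hC _).trans_eq (by rw [absInv_neg])
    _ = _ := by
        simp only [tripleWeight, add_zero]
        ring

theorem nonneg_of_norm_le_mul_absInv (hC : ∀ k, ‖C k‖ ≤ M * absInv k) : 0 ≤ M := by
  simpa [absInv] using (norm_nonneg _).trans (hC 1)

theorem summable_norm_tripleTerm (hC : ∀ k, ‖C k‖ ≤ M * absInv k) (a b : ℤ) :
    Summable fun p => ‖tripleTerm C a b p‖ := by
  have hM := nonneg_of_norm_le_mul_absInv hC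
  refine ((summable_tripleWeight 0 0).mul_left (M ^ 3)).of_nonneg_of_le
    (fun _ => norm_nonneg _) fun p => (norm_tripleTerm_le hC a b p).trans ?_
  gcongr
  exact mul_le_of_le_one_right (tripleWeight_nonneg 0 0 p)
    (mul_le_one₀ (absInv_le_one _) (absInv_nonneg _) (absInv_le_one _))

theorem max_abs_mul_tsum_norm_tripleTerm_le (hC : ∀ k, ‖C k‖ ≤ M * absInv k) (a b : ℤ) :
    max |(a : ℝ)| |(b : ℝ)| * ∑' p, ‖tripleTerm C a b p‖ ≤
      3 * M ^ 3 * (∑' k, absInv k ^ (3 / 2 : ℝ)) ^ 2 := by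
  have hM := nonneg_of_norm_le_mul_absInv hC
  have hterm (p : ℤ × ℤ) : max |(a : ℝ)| |(b : ℝ)| * ‖tripleTerm C a b p‖ ≤
      M ^ 3 * (tripleWeight 0 0 p + tripleWeight a 0 p + tripleWeight 0 b p) := by
    refine (mul_le_mul_of_nonneg_left (norm_tripleTerm_le hC a b p) (by positivity)).trans ?_
    rw [mul_left_comm]
    gcongr
    exact max_abs_mul_tripleWeight_mul_le a b p
  have hsum := (((summable_tripleWeight 0 0).hasSum.add
    (summable_tripleWeight a 0).hasSum).add (summable_tripleWeight 0 b).hasSum).mul_left (M ^ 3)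
  calc _ ≤ M ^ 3 * (∑' p, tripleWeight 0 0 p + ∑' p, tripleWeight a 0 p +
          ∑' p, tripleWeight 0 b p) :=
        hasSum_le hterm ((summable_norm_tripleTerm hC a b).hasSum.mul_left _) hsum
    _ ≤ M ^ 3 * ((∑' k, absInv k ^ (3 / 2 : ℝ)) ^ 2 + (∑' k, absInv k ^ (3 / 2 : ℝ)) ^ 2 +
          (∑' k, absInv k ^ (3 / 2 : ℝ)) ^ 2) := by
        gcongr <;> exact tsum_tripleWeight_le _ _
    _ = _ := by ring

theorem norm_tripleSum_le_tsum_norm (hC : ∀ k, ‖C k‖ ≤ M * absInv k) (A : Set (ℤ × ℤ))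
    (a b : ℤ) : ‖tripleSum C A a b‖ ≤ ∑' p, ‖tripleTerm C a b p‖ :=
  tsum_of_norm_bounded (summable_norm_tripleTerm hC a b).hasSum
    fun _ => norm_indicator_le_norm_self _ _

theorem exists_norm_le_mul_absInv (hC0 : C 0 = 0)
    (hC : C =O[cofinite] fun k : ℤ => 1 / (k : ℝ)) : ∃ M, ∀ k, ‖C k‖ ≤ M * absInv k := by
  simpa [absInv] using (isBigO_cofinite_iff (by simpa using hC0)).mp hC

theorem stmt10_general (hC0 : C 0 = 0) (hC : C =O[cofinite] fun k : ℤ => 1 / (k : ℝ))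
    (A : ℕ → Set (ℤ × ℤ)) {a b : ℕ → ℤ} (hab : ∀ n : ℕ, (n : ℝ) ≤ max |(a n : ℝ)| |(b n : ℝ)|) :
    (fun n => tripleSum C (A n) (a n) (b n)) =O[atTop] fun n : ℕ => 1 / (n : ℝ) := by
  obtain ⟨M, hM⟩ := exists_norm_le_mul_absInv hC0 hC
  refine IsBigO.of_bound (3 * M ^ 3 * (∑' k, absInv k ^ (3 / 2 : ℝ)) ^ 2) ?_
  filter_upwards [eventually_gt_atTop 0] with n hn
  rw [norm_div, norm_one, Real.norm_natCast, mul_one_div, le_div_iff₀' (mod_cast hn)]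
  calc (n : ℝ) * ‖tripleSum C (A n) (a n) (b n)‖
      ≤ max |(a n : ℝ)| |(b n : ℝ)| * ∑' p, ‖tripleTerm C (a n) (b n) p‖ := by
        gcongr
        · exact hab n
        · exact norm_tripleSum_le_tsum_norm hM (A n) (a n) (b n)
    _ ≤ _ := max_abs_mul_tsum_norm_tripleTerm_le hM (a n) (b n)

end TripleSum

theorem cosCoef_neg (q : ℝ → ℂ) (k : ℤ) : cosCoef q (-k) = cosCoef q k := by
  simp [cosCoef]

theorem isBigO_cofinite_cosCoef {q : ℝ → ℂ}
    (hE : (fun n : ℕ => cosCoef q (n : ℤ)) =O[atTop] fun n : ℕ => (1 : ℝ) / n) :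
    cosCoef q =O[cofinite] fun k : ℤ => 1 / (k : ℝ) := by
  have hTop : cosCoef q =O[atTop] fun k : ℤ => 1 / (k : ℝ) := by
    rw [← Nat.map_cast_int_atTop, isBigO_map]
    simpa [Function.comp_def] using hE
  have hBot : cosCoef q =O[atBot] fun k : ℤ => 1 / (k : ℝ) := by
    rw [← map_neg_atTop, isBigO_map]
    simpa [Function.comp_def, cosCoef_neg, div_neg] using hTop
  rw [Int.cofinite_eq]
  exact hBot.sup hTop

theorem S2sum_eq_tripleSum (q : ℝ → ℂ) (n : ℕ) :
    S2sum q n = tripleSum (cosCoef q) {p | Sadm n p} (2 * n) 0 := by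
  simp [S2sum, tripleSum, tripleTerm, Set.indicator_apply, add_comm]

theorem S3sum_eq_tripleSum (q : ℝ → ℂ) (n : ℕ) :
    S3sum q n = tripleSum (cosCoef q) {p | Sadm n p} 0 (2 * n) := by
  simp [S3sum, tripleSum, tripleTerm, Set.indicator_apply, add_comm (2 * (n : ℂ)),
    add_right_comm _ (2 * (n : ℂ))]

theorem S4sum_eq_tripleSum (q : ℝ → ℂ) (n : ℕ) :
    S4sum q n = tripleSum (cosCoef q) {p | Sadm n p} (2 * n) (2 * n) := by
  simp [S4sum, tripleSum, tripleTerm, Set.indicator_apply, add_comm (2 * (n : ℂ)),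
    add_right_comm _ (2 * (n : ℂ))]

/-- If `q` belongs to the class `E` (i.e. `C_n = O(1/n)` and `C₀ = 0`),
then `S_j(n,q) = O(1/n)` as `n → ∞` for `j = 2, 3, 4`. -/
theorem stmt10 (q : ℝ → ℂ)
    (hint : IntervalIntegrable q volume 0 Real.pi)
    (hC0 : cosCoef q 0 = 0)
    (hE : (fun n : ℕ => cosCoef q (n : ℤ)) =O[atTop] fun n : ℕ => (1 : ℝ) / n) :
    ((fun n : ℕ => S2sum q n) =O[atTop] fun n : ℕ => 1 / (n : ℝ)) ∧
    ((fun n : ℕ => S3sum q n) =O[atTop] fun n : ℕ => 1 / (n : ℝ)) ∧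
    ((fun n : ℕ => S4sum q n) =O[atTop] fun n : ℕ => 1 / (n : ℝ)) := by
  have hC := isBigO_cofinite_cosCoef hE
  have h2n (n : ℕ) : (n : ℝ) ≤ |((2 * n : ℤ) : ℝ)| := by
    push_cast
    linarith [le_abs_self (2 * (n : ℝ)), n.cast_nonneg (α := ℝ)]
  simp only [S2sum_eq_tripleSum, S3sum_eq_tripleSum, S4sum_eq_tripleSum]
  exact ⟨stmt10_general hC0 hC _ fun n => (h2n n).trans (le_max_left _ _),
    stmt10_general hC0 hC _ fun n => (h2n n).trans (le_max_right _ _),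
    stmt10_general hC0 hC _ fun n => (h2n n).trans (le_max_left _ _)⟩
end

section
/- If q belongs to the class E, then a_2(n²) = O(1/n³) as n → ∞, where a_2(n²) = Σ_{(n_1,n_2) ∈ ℤ²} C_{n_1} C_{n_2} ( C_{n_1+n_2} − C_{n_1+n_2+2n} ) / ( [n² − (n+n_1)²][n² − (n+n_1+n_2)²] ), the sum being restricted to pairs with n_1 ∉ {0, −2n} and n_1 + n_2 ∉ {0, −2n}. -/
open MeasureTheory Filter Asymptotics

/-- `a₂(n²) = Σ C_{n₁} C_{n₂} (C_{n₁+n₂} − C_{n₁+n₂+2n}) / ([n²−(n+n₁)²][n²−(n+n₁+n₂)²])`,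
over pairs with `n₁ ∉ {0, −2n}` and `n₁+n₂ ∉ {0, −2n}`. -/
noncomputable def a2sum (q : ℝ → ℂ) (n : ℕ) : ℂ :=
  ∑' v : ℤ × ℤ,
    if v.1 ≠ 0 ∧ v.1 ≠ -(2 * (n : ℤ)) ∧ v.1 + v.2 ≠ 0 ∧ v.1 + v.2 ≠ -(2 * (n : ℤ)) then
      cosCoef q v.1 * cosCoef q v.2 *
        (cosCoef q (v.1 + v.2) - cosCoef q (v.1 + v.2 + 2 * n)) /
        ((((n : ℂ))^2 - ((n : ℂ) + (v.1 : ℂ))^2) *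
          (((n : ℂ))^2 - ((n : ℂ) + (v.1 : ℂ) + (v.2 : ℂ))^2))
    else 0

/-! Put `N = 2n`. The factors `n² - (n + m)² = -m (m + N)` of the denominator split into partial
fractions `1 / (m (m + N)) = (1 / N) (1 / m - 1 / (m + N))`, so to leading order the series is
`N⁻²` times `∑ C_m C_k C_{m+k} / (m (m + k))`. With `l = -m - k` its general term is
`-C_m C_k C_l / (m l)`, because `C` is even, and the leading series vanishes: the three cyclic
permutations of `(m, k, l)` contribute the factor
`1 / (m l) + 1 / (k m) + 1 / (l k) = (m + k + l) / (m k l) = 0`. Every remaining term gains one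
more factor `1 / N`, because `|m| + |m + N| ≥ N` and `|m| + |k| + |m + k + N| ≥ N`.
-/

section Summation

variable {ι κ : Type*} {f : ι → ℝ} {g : κ → ℝ}

lemma hasSum_mul_of_nonneg (hf : Summable f) (hg : Summable g) (hf0 : 0 ≤ f) (hg0 : 0 ≤ g) :
    HasSum (fun v : ι × κ => f v.1 * g v.2) ((∑' i, f i) * ∑' j, g j) :=
  hf.hasSum.mul hg.hasSum (hf.mul_of_nonneg hg hf0 hg0)

lemma hasSum_mul_fst_add_of_nonneg [AddGroup ι] {g : ι → ℝ} (hf : Summable f) (hg : Summable g)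
    (hf0 : 0 ≤ f) (hg0 : 0 ≤ g) :
    HasSum (fun v : ι × ι => f v.1 * g (v.1 + v.2)) ((∑' i, f i) * ∑' i, g i) :=
  (Equiv.prodShear (Equiv.refl ι) Equiv.addLeft).hasSum_iff.2
    (hasSum_mul_of_nonneg hf hg hf0 hg0)

lemma hasSum_mul_add_snd_of_nonneg [AddGroup ι] {g : ι → ℝ} (hf : Summable f) (hg : Summable g)
    (hf0 : 0 ≤ f) (hg0 : 0 ≤ g) :
    HasSum (fun v : ι × ι => f (v.1 + v.2) * g v.2) ((∑' i, f i) * ∑' i, g i) :=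
  ((Equiv.prodComm ι ι).trans ((Equiv.prodShear (Equiv.refl ι) Equiv.addRight).trans
    (Equiv.prodComm ι ι))).hasSum_iff.2 (hasSum_mul_of_nonneg hf hg hf0 hg0)

lemma hasSum_eq_zero_of_sum_pow_apply_eq_zero {E : Type*} [AddCommGroup E] [TopologicalSpace E]
    [ContinuousAdd E] [T2Space E] [IsAddTorsionFree E] {f : ι → E} {a : E} (hf : HasSum f a)
    (σ : Equiv.Perm ι) {p : ℕ} (hp : p ≠ 0)
    (hσ : ∀ i, ∑ j ∈ Finset.range p, f ((σ ^ j) i) = 0) : a = 0 := by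
  have hsum : HasSum (fun i => ∑ j ∈ Finset.range p, f ((σ ^ j) i))
      (∑ _j ∈ Finset.range p, a) :=
    hasSum_sum fun j _ => (σ ^ j).hasSum_iff.2 hf
  simp only [hσ, Finset.sum_const, Finset.card_range] at hsum
  exact (nsmul_eq_zero_iff_right hp).1 (hsum.unique hasSum_zero)

end Summation

section InvAbs

/-- The weight `1 / |k|`, equal to `0` at `k = 0`; a bound `‖C k‖ ≤ M * invAbs k` therefore
expresses both the decay of `C` and `C 0 = 0`. -/
noncomputable def invAbs (k : ℤ) : ℝ := |(k : ℝ)|⁻¹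

lemma invAbs_nonneg (k : ℤ) : 0 ≤ invAbs k := inv_nonneg.2 (abs_nonneg _)

lemma invAbs_zero : invAbs 0 = 0 := by simp [invAbs]

lemma invAbs_neg (k : ℤ) : invAbs (-k) = invAbs k := by simp [invAbs]

lemma invAbs_le_one (k : ℤ) : invAbs k ≤ 1 := by
  rcases eq_or_ne k 0 with rfl | hk
  · simp [invAbs]
  · exact inv_le_one_of_one_le₀ (mod_cast Int.one_le_abs hk)

lemma norm_inv_intCast (k : ℤ) : ‖(k : ℂ)⁻¹‖ = invAbs k := by
  rw [norm_inv, Complex.norm_intCast, invAbs]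

lemma summable_invAbs_sq : Summable fun k => invAbs k ^ 2 :=
  ((Real.summable_one_div_int_pow (p := 2)).2 one_lt_two).congr fun k => by simp [invAbs]

lemma inv_mul_inv_le {a b d : ℝ} (ha : 0 ≤ a) (hb : 0 ≤ b) (hd : 0 < d) (h : d ≤ a + b) :
    a⁻¹ * b⁻¹ ≤ d⁻¹ * (a⁻¹ + b⁻¹) := by
  rcases ha.eq_or_lt with rfl | ha
  · simp only [inv_zero, zero_mul, zero_add]; positivity
  rcases hb.eq_or_lt with rfl | hb
  · simp only [inv_zero, mul_zero, add_zero]; positivity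
  calc a⁻¹ * b⁻¹ = d⁻¹ * (d * (a⁻¹ * b⁻¹)) := by field_simp
    _ ≤ d⁻¹ * ((a + b) * (a⁻¹ * b⁻¹)) := by gcongr
    _ = d⁻¹ * (a⁻¹ + b⁻¹) := by field_simp; ring

lemma inv_mul_inv_mul_inv_le {a b c d : ℝ} (ha : 0 ≤ a) (hb : 0 ≤ b) (hc : 0 ≤ c) (hd : 0 < d)
    (h : d ≤ a + b + c) :
    a⁻¹ * b⁻¹ * c⁻¹ ≤ d⁻¹ * (a⁻¹ * b⁻¹ + b⁻¹ * c⁻¹ + a⁻¹ * c⁻¹) := by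
  rcases ha.eq_or_lt with rfl | ha
  · simp only [inv_zero, zero_mul, zero_add]; positivity
  rcases hb.eq_or_lt with rfl | hb
  · simp only [inv_zero, zero_mul, mul_zero, zero_add]; positivity
  rcases hc.eq_or_lt with rfl | hc
  · simp only [inv_zero, mul_zero, add_zero]; positivity
  calc a⁻¹ * b⁻¹ * c⁻¹ = d⁻¹ * (d * (a⁻¹ * b⁻¹ * c⁻¹)) := by field_simp
    _ ≤ d⁻¹ * ((a + b + c) * (a⁻¹ * b⁻¹ * c⁻¹)) := by gcongr
    _ = d⁻¹ * (a⁻¹ * b⁻¹ + b⁻¹ * c⁻¹ + a⁻¹ * c⁻¹) := by field_simp; ring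

lemma exists_norm_le_mul_invAbs {E : Type*} [NormedAddCommGroup E] {C : ℤ → E}
    (heven : Function.Even C) (hC0 : C 0 = 0)
    (hC : (fun n : ℕ => C n) =O[atTop] fun n : ℕ => (1 : ℝ) / n) :
    ∃ M, 0 ≤ M ∧ ∀ k, ‖C k‖ ≤ M * invAbs k := by
  obtain ⟨M, hM, hbound⟩ := bound_of_isBigO_nat_atTop hC
  have hnat (j : ℕ) : ‖C j‖ ≤ M * invAbs j := by
    rcases eq_or_ne j 0 with rfl | hj
    · simp [hC0, invAbs]
    · simpa [invAbs] using hbound (x := j) (by simpa using hj)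
  refine ⟨M, hM.le, fun k => ?_⟩
  obtain ⟨j, rfl | rfl⟩ := k.eq_nat_or_neg
  · exact hnat j
  · rw [heven, invAbs_neg]
    exact hnat j

end InvAbs

section Majorant

/-- The sum of the weights of `m` at the two poles `0` and `-N` of `1 / (m (m + N))`. -/
noncomputable def poleWeight (N m : ℤ) : ℝ := invAbs m + invAbs (m + N)

/-- The function of `(m, k)`, with `ℓ²` factors and hence summable uniformly in `N`, by which
the error terms are dominated after a factor `N⁻³` has been extracted. -/
noncomputable def majorant (N : ℤ) (v : ℤ × ℤ) : ℝ :=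
  poleWeight N v.1 ^ 2 * invAbs v.2 ^ 2 + poleWeight N (v.1 + v.2) ^ 2 * invAbs v.2 ^ 2
    + 2 * (poleWeight N v.1 ^ 2 * poleWeight N (v.1 + v.2) ^ 2)

variable (N m k : ℤ)

lemma poleWeight_nonneg : 0 ≤ poleWeight N m := add_nonneg (invAbs_nonneg _) (invAbs_nonneg _)

lemma invAbs_le_poleWeight : invAbs m ≤ poleWeight N m :=
  le_add_of_nonneg_right (invAbs_nonneg _)

lemma invAbs_add_le_poleWeight : invAbs (m + N) ≤ poleWeight N m :=
  le_add_of_nonneg_left (invAbs_nonneg _)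

lemma poleWeight_sq_le : poleWeight N m ^ 2 ≤ 2 * (invAbs m ^ 2 + invAbs (m + N) ^ 2) :=
  add_sq_le

lemma hasSum_invAbs_sq_add_shift :
    HasSum (fun m => 2 * (invAbs m ^ 2 + invAbs (m + N) ^ 2)) 
      (2 * ((∑' m, invAbs m ^ 2) + ∑' m, invAbs m ^ 2)) := by
  have hsum := summable_invAbs_sq.hasSum
  exact (hsum.add ((Equiv.addRight N).hasSum_iff.2 hsum)).mul_left 2

lemma summable_poleWeight_sq : Summable fun m => poleWeight N m ^ 2 :=
  .of_nonneg_of_le (fun _ => sq_nonneg _) (poleWeight_sq_le N)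
    (hasSum_invAbs_sq_add_shift N).summable

lemma tsum_poleWeight_sq_le : ∑' m, poleWeight N m ^ 2 ≤ 4 * ∑' m, invAbs m ^ 2 :=
  (hasSum_le (poleWeight_sq_le N) (summable_poleWeight_sq N).hasSum
    (hasSum_invAbs_sq_add_shift N)).trans_eq (by ring)

lemma hasSum_majorant :
    HasSum (majorant N)
      ((∑' m, poleWeight N m ^ 2) * (∑' k, invAbs k ^ 2)
        + (∑' m, poleWeight N m ^ 2) * (∑' k, invAbs k ^ 2)
        + 2 * ((∑' m, poleWeight N m ^ 2) * ∑' m, poleWeight N m ^ 2)) := by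
  have hA := summable_poleWeight_sq N
  have hA0 : 0 ≤ fun m => poleWeight N m ^ 2 := fun _ => sq_nonneg _
  have hz0 : 0 ≤ fun k => invAbs k ^ 2 := fun _ => sq_nonneg _
  exact ((hasSum_mul_of_nonneg hA summable_invAbs_sq hA0 hz0).add
    (hasSum_mul_add_snd_of_nonneg hA summable_invAbs_sq hA0 hz0)).add
    ((hasSum_mul_fst_add_of_nonneg hA hA hA0 hA0).mul_left 2)

lemma tsum_majorant_le : ∑' v, majorant N v ≤ 40 * (∑' k, invAbs k ^ 2) ^ 2 := by
  rw [(hasSum_majorant N).tsum_eq]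
  have hle := tsum_poleWeight_sq_le N
  set A := ∑' m, poleWeight N m ^ 2
  set S := ∑' k, invAbs k ^ 2
  calc A * S + A * S + 2 * (A * A)
      ≤ 4 * S * S + 4 * S * S + 2 * (4 * S * (4 * S)) := by gcongr
    _ = 40 * S ^ 2 := by ring

lemma two_mul_poleWeight_mul_le_majorant :
    2 * (poleWeight N m * poleWeight N (m + k) * invAbs k *
      (poleWeight N m + poleWeight N (m + k))) ≤ majorant N (m, k) := by
  simp only [majorant]
  set A := poleWeight N m
  set B := poleWeight N (m + k)
  set z := invAbs k
  calc 2 * (A * B * z * (A + B)) = A ^ 2 * (2 * B * z) + B ^ 2 * (2 * A * z) := by ring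
    _ ≤ A ^ 2 * (B ^ 2 + z ^ 2) + B ^ 2 * (A ^ 2 + z ^ 2) := by
        gcongr <;> exact two_mul_le_add_sq _ _
    _ = A ^ 2 * z ^ 2 + B ^ 2 * z ^ 2 + 2 * (A ^ 2 * B ^ 2) := by ring

lemma two_mul_poleWeight_sq_mul_le_majorant :
    2 * (poleWeight N m ^ 2 * poleWeight N (m + k) ^ 2) ≤ majorant N (m, k) :=
  le_add_of_nonneg_left (by positivity)

lemma majorant_nonneg (v : ℤ × ℤ) : 0 ≤ majorant N v := by
  unfold majorant; positivity

end Majorant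

section WeightEstimates

variable {N : ℤ}

lemma invAbs_mul_invAbs_add_le (hN : N ≠ 0) (m : ℤ) :
    invAbs m * invAbs (m + N) ≤ invAbs N * poleWeight N m := by
  refine inv_mul_inv_le (abs_nonneg _) (abs_nonneg _) (by positivity) ?_
  calc |(N : ℝ)| = |-(m : ℝ) + (m + N : ℤ)| := by push_cast; ring_nf
    _ ≤ |(m : ℝ)| + |((m + N : ℤ) : ℝ)| := by simpa only [abs_neg] using abs_add_le (-(m : ℝ)) _

lemma invAbs_mul_invAbs_mul_invAbs_add_le (hN : N ≠ 0) (m k : ℤ) :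
    invAbs m * invAbs k * invAbs (m + k + N) ≤ invAbs N *
      (invAbs m * invAbs k + invAbs k * invAbs (m + k + N) + invAbs m * invAbs (m + k + N)) := by
  refine inv_mul_inv_mul_inv_le (abs_nonneg _) (abs_nonneg _) (abs_nonneg _) (by positivity) ?_
  calc |(N : ℝ)| = |-(m : ℝ) + -(k : ℝ) + (m + k + N : ℤ)| := by push_cast; ring_nf
    _ ≤ |(m : ℝ)| + |(k : ℝ)| + |((m + k + N : ℤ) : ℝ)| := by
        simpa only [abs_neg] using abs_add_three (-(m : ℝ)) (-(k : ℝ)) _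

lemma invAbs_mul_crossTerms_le_majorant (hN : N ≠ 0) (m k : ℤ) :
    invAbs m * invAbs k * invAbs (m + k) * (invAbs (m + N) * invAbs (m + k + N) +
      invAbs m * invAbs (m + k + N) + invAbs (m + N) * invAbs (m + k)) ≤
      invAbs N * majorant N (m, k) := by
  have hxx' := invAbs_mul_invAbs_add_le hN m
  have hyy' := invAbs_mul_invAbs_add_le hN (m + k)
  have hx := invAbs_nonneg m
  have hy := invAbs_nonneg (m + k)
  have hy' := invAbs_nonneg (m + k + N)
  have hz := invAbs_nonneg k
  have he := invAbs_nonneg N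
  have hxA := invAbs_le_poleWeight N m
  have hyB := invAbs_le_poleWeight N (m + k)
  have hy'B := invAbs_add_le_poleWeight N (m + k)
  have hA := poleWeight_nonneg N m
  have hB := poleWeight_nonneg N (m + k)
  have hmaj := two_mul_poleWeight_mul_le_majorant N m k
  set x := invAbs m
  set x' := invAbs (m + N)
  set y := invAbs (m + k)
  set y' := invAbs (m + k + N)
  set z := invAbs k
  set e := invAbs N
  set A := poleWeight N m
  set B := poleWeight N (m + k)
  calc x * z * y * (x' * y' + x * y' + x' * y)
      = x * x' * z * y * y' + x * x * z * (y * y') + x * x' * z * y * y := by ring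
    _ ≤ e * A * z * B * B + A * A * z * (e * B) + e * A * z * B * B := by gcongr
    _ = e * (A * B * z * (A + 2 * B)) := by ring
    _ ≤ e * (A * B * z * (2 * A + 2 * B)) := by gcongr; linarith
    _ = e * (2 * (A * B * z * (A + B))) := by ring
    _ ≤ e * majorant N (m, k) := by gcongr

lemma invAbs_mul_poleProducts_le_majorant (hN : N ≠ 0) (m k : ℤ) :
    invAbs m * invAbs k * invAbs (m + k + N) *
      (invAbs m * invAbs (m + N) * (invAbs (m + k) * invAbs (m + k + N))) ≤
      invAbs N ^ 3 * majorant N (m, k) := by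
  have hxx' := invAbs_mul_invAbs_add_le hN m
  have hyy' := invAbs_mul_invAbs_add_le hN (m + k)
  have hxzy' := invAbs_mul_invAbs_mul_invAbs_add_le hN m k
  have hx := invAbs_nonneg m
  have hx' := invAbs_nonneg (m + N)
  have hy := invAbs_nonneg (m + k)
  have hy' := invAbs_nonneg (m + k + N)
  have hz := invAbs_nonneg k
  have he := invAbs_nonneg N
  have hxA := invAbs_le_poleWeight N m
  have hy'B := invAbs_add_le_poleWeight N (m + k)
  have hA := poleWeight_nonneg N m
  have hB := poleWeight_nonneg N (m + k)
  have hmaj := two_mul_poleWeight_mul_le_majorant N m k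
  have hmaj' := two_mul_poleWeight_sq_mul_le_majorant N m k
  set x := invAbs m
  set x' := invAbs (m + N)
  set y := invAbs (m + k)
  set y' := invAbs (m + k + N)
  set z := invAbs k
  set e := invAbs N
  set A := poleWeight N m
  set B := poleWeight N (m + k)
  calc x * z * y' * (x * x' * (y * y'))
      ≤ e * (x * z + z * y' + x * y') * (e * A * (e * B)) := by gcongr
    _ ≤ e * (A * z + z * B + A * B) * (e * A * (e * B)) := by gcongr
    _ = e ^ 3 * (A * B * z * (A + B) + A ^ 2 * B ^ 2) := by ring
    _ ≤ e ^ 3 * majorant N (m, k) := by gcongr; linarith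

lemma invAbs_sq_mul_le_majorant_of_resonant {m k : ℤ}
    (h : m = 0 ∨ m = -N ∨ m + k = 0 ∨ m + k = -N) :
    invAbs m ^ 2 * invAbs k * invAbs (m + k) ^ 2 ≤ invAbs N * majorant N (m, k) := by
  have hmin : invAbs m ≤ invAbs N ∨ invAbs (m + k) ≤ invAbs N := by
    rcases h with h | h | h | h <;>
      simp only [h, invAbs_zero, invAbs_neg, invAbs_nonneg, le_refl, true_or, or_true]
  have hx := invAbs_nonneg m
  have hy := invAbs_nonneg (m + k)
  have hz := invAbs_nonneg k
  have he := invAbs_nonneg N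
  have hxA := invAbs_le_poleWeight N m
  have hyB := invAbs_le_poleWeight N (m + k)
  have hA := poleWeight_nonneg N m
  have hB := poleWeight_nonneg N (m + k)
  have hmaj := two_mul_poleWeight_mul_le_majorant N m k
  set x := invAbs m
  set y := invAbs (m + k)
  set z := invAbs k
  set e := invAbs N
  set A := poleWeight N m
  set B := poleWeight N (m + k)
  have hxy : x * y ≤ e * (x + y) := by
    rcases hmin with hxe | hye <;> nlinarith
  calc x ^ 2 * z * y ^ 2 = x * y * z * (x * y) := by ring
    _ ≤ x * y * z * (e * (x + y)) := by gcongr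
    _ ≤ A * B * z * (e * (A + B)) := by gcongr
    _ = e * (A * B * z * (A + B)) := by ring
    _ ≤ e * majorant N (m, k) := by
        gcongr
        have : 0 ≤ A * B * z * (A + B) := by positivity
        linarith

end WeightEstimates

section LeadingTerm

/-- The general term of the leading series `∑ C_m C_k C_{m+k} / (m (m + k))`. -/
noncomputable def leadingTerm (C : ℤ → ℂ) (v : ℤ × ℤ) : ℂ :=
  C v.1 * C v.2 * C (v.1 + v.2) * ((v.1 : ℂ)⁻¹ * ((v.1 + v.2 : ℤ) : ℂ)⁻¹)

/-- The rotation of the zero-sum triple `(m, k, -m - k)`, recorded by its first two entries. -/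
def rotateZeroSum (G : Type*) [AddCommGroup G] : Equiv.Perm (G × G) where
  toFun v := (v.2, -v.1 - v.2)
  invFun v := (-v.1 - v.2, v.1)
  left_inv v := Prod.ext (by dsimp only; abel) rfl
  right_inv v := Prod.ext rfl (by dsimp only; abel)

variable {C : ℤ → ℂ} {M : ℝ}

lemma norm_leadingTerm_le (hM : 0 ≤ M) (hC : ∀ k, ‖C k‖ ≤ M * invAbs k) (m k : ℤ) :
    ‖leadingTerm C (m, k)‖ ≤ M ^ 3 * (invAbs m ^ 2 * invAbs k * invAbs (m + k) ^ 2) := by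
  have hx := invAbs_nonneg m
  have hy := invAbs_nonneg (m + k)
  have hz := invAbs_nonneg k
  simp only [leadingTerm, norm_mul, norm_inv_intCast]
  calc ‖C m‖ * ‖C k‖ * ‖C (m + k)‖ * (invAbs m * invAbs (m + k))
      ≤ (M * invAbs m) * (M * invAbs k) * (M * invAbs (m + k)) *
          (invAbs m * invAbs (m + k)) := by gcongr <;> apply hC
    _ = M ^ 3 * (invAbs m ^ 2 * invAbs k * invAbs (m + k) ^ 2) := by ring

lemma summable_leadingTerm (hM : 0 ≤ M) (hC : ∀ k, ‖C k‖ ≤ M * invAbs k) :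
    Summable (leadingTerm C) := by
  have hsum : Summable fun v : ℤ × ℤ => M ^ 3 * (invAbs v.1 ^ 2 * invAbs (v.1 + v.2) ^ 2) :=
    (hasSum_mul_fst_add_of_nonneg summable_invAbs_sq summable_invAbs_sq
      (fun _ => sq_nonneg _) (fun _ => sq_nonneg _)).summable.mul_left _
  refine .of_norm_bounded hsum fun v => (norm_leadingTerm_le hM hC v.1 v.2).trans ?_
  gcongr
  exact mul_le_of_le_one_right (sq_nonneg _) (invAbs_le_one _)

lemma leadingTerm_eq_neg_mul_inv (heven : Function.Even C) {m k l : ℤ} (h : m + k + l = 0) :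
    leadingTerm C (m, k) = -(C m * C k * C l) * ((m : ℂ)⁻¹ * (l : ℂ)⁻¹) := by
  have hl : m + k = -l := by lia
  simp only [leadingTerm, hl, heven l, Int.cast_neg, inv_neg]
  ring

lemma sum_leadingTerm_rotateZeroSum (heven : Function.Even C) (hC0 : C 0 = 0) (v : ℤ × ℤ) :
    ∑ j ∈ Finset.range 3, leadingTerm C ((rotateZeroSum ℤ ^ j) v) = 0 := by
  obtain ⟨m, k⟩ := v
  obtain ⟨l, hl⟩ : ∃ l, l = -m - k := ⟨_, rfl⟩
  have hrot : rotateZeroSum ℤ (m, k) = (k, l) := Prod.ext rfl hl.symm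
  have hrot' : rotateZeroSum ℤ (k, l) = (l, m) := Prod.ext rfl (by simp [rotateZeroSum]; lia)
  simp only [Finset.sum_range_succ, Finset.sum_range_zero, zero_add, pow_zero, pow_one, sq,
    Equiv.Perm.mul_apply, Equiv.Perm.one_apply, hrot, hrot']
  rw [leadingTerm_eq_neg_mul_inv heven (l := l) (by lia),
    leadingTerm_eq_neg_mul_inv heven (l := m) (by lia),
    leadingTerm_eq_neg_mul_inv heven (l := k) (by lia)]
  by_cases hzero : m = 0 ∨ k = 0 ∨ l = 0
  · rcases hzero with h | h | h <;> simp [h, hC0]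
  push Not at hzero
  obtain ⟨hm, hk, hl0⟩ := hzero
  have hsum : (m : ℂ) + k + l = 0 := by rw [hl]; push_cast; ring
  field_simp
  linear_combination -(C m * C k * C l) * hsum

lemma tsum_leadingTerm (hM : 0 ≤ M) (hC : ∀ k, ‖C k‖ ≤ M * invAbs k)
    (heven : Function.Even C) : ∑' v, leadingTerm C v = 0 := by
  have hC0 : C 0 = 0 := by simpa only [invAbs_zero, mul_zero, norm_le_zero_iff] using hC 0
  exact hasSum_eq_zero_of_sum_pow_apply_eq_zero (summable_leadingTerm hM hC).hasSum
    (rotateZeroSum ℤ) three_ne_zero (sum_leadingTerm_rotateZeroSum heven hC0)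

end LeadingTerm

section SecondOrderTerm

/-- The general term of the series for `a₂(n²)`, for an arbitrary sequence `C` in place of the
cosine coefficients of `q`. -/
noncomputable def a2Term (C : ℤ → ℂ) (n : ℕ) (v : ℤ × ℤ) : ℂ :=
  if v.1 ≠ 0 ∧ v.1 ≠ -(2 * (n : ℤ)) ∧ v.1 + v.2 ≠ 0 ∧ v.1 + v.2 ≠ -(2 * (n : ℤ)) then
    C v.1 * C v.2 * (C (v.1 + v.2) - C (v.1 + v.2 + 2 * n)) /
      (((n : ℂ) ^ 2 - ((n : ℂ) + (v.1 : ℂ)) ^ 2) *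
        ((n : ℂ) ^ 2 - ((n : ℂ) + (v.1 : ℂ) + (v.2 : ℂ)) ^ 2))
  else 0

lemma a2Term_of_nonresonant (C : ℤ → ℂ) (n : ℕ) {m k : ℤ}
    (h : m ≠ 0 ∧ m ≠ -(2 * n) ∧ m + k ≠ 0 ∧ m + k ≠ -(2 * n)) :
    a2Term C n (m, k) = C m * C k * (C (m + k) - C (m + k + 2 * n)) *
      (((m : ℂ)⁻¹ * ((m + 2 * n : ℤ) : ℂ)⁻¹) *
        (((m + k : ℤ) : ℂ)⁻¹ * ((m + k + 2 * n : ℤ) : ℂ)⁻¹)) := by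
  rw [a2Term, if_pos h, div_eq_mul_inv, ← mul_inv, ← mul_inv, ← mul_inv]
  push_cast
  ring_nf

lemma inv_mul_inv_add_eq {K : Type*} [Field K] {a b : K} (ha : a ≠ 0) (hb : b ≠ 0)
    (hab : a + b ≠ 0) : a⁻¹ * (a + b)⁻¹ = b⁻¹ * (a⁻¹ - (a + b)⁻¹) := by
  field_simp
  ring

lemma a2Term_sub_leadingTerm_eq (C : ℤ → ℂ) {n : ℕ} (hn : n ≠ 0) {m k : ℤ}
    (h : m ≠ 0 ∧ m ≠ -(2 * n) ∧ m + k ≠ 0 ∧ m + k ≠ -(2 * n)) :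
    a2Term C n (m, k) - ((2 * n : ℤ) : ℂ)⁻¹ ^ 2 * leadingTerm C (m, k) =
      ((2 * n : ℤ) : ℂ)⁻¹ ^ 2 * (C m * C k * C (m + k) *
        (((m + 2 * n : ℤ) : ℂ)⁻¹ * ((m + k + 2 * n : ℤ) : ℂ)⁻¹
          - (m : ℂ)⁻¹ * ((m + k + 2 * n : ℤ) : ℂ)⁻¹
          - ((m + 2 * n : ℤ) : ℂ)⁻¹ * ((m + k : ℤ) : ℂ)⁻¹))
      - C m * C k * C (m + k + 2 * n) * (((m : ℂ)⁻¹ * ((m + 2 * n : ℤ) : ℂ)⁻¹) *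
        (((m + k : ℤ) : ℂ)⁻¹ * ((m + k + 2 * n : ℤ) : ℂ)⁻¹)) := by
  have hsplit {a : ℤ} (ha : a ≠ 0) (ha' : a ≠ -(2 * n)) :
      (a : ℂ)⁻¹ * ((a + 2 * n : ℤ) : ℂ)⁻¹ =
        ((2 * n : ℤ) : ℂ)⁻¹ * ((a : ℂ)⁻¹ - ((a + 2 * n : ℤ) : ℂ)⁻¹) := by
    rw [Int.cast_add]
    exact inv_mul_inv_add_eq (mod_cast ha) (mod_cast (by lia : (2 * n : ℤ) ≠ 0))
      (mod_cast (by lia : a + 2 * n ≠ 0))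
  rw [a2Term_of_nonresonant C n h, leadingTerm, mul_sub, sub_mul,
    sub_right_comm]
  congr 1
  rw [hsplit h.1 h.2.1, hsplit h.2.2.1 h.2.2.2]
  ring

variable {C : ℤ → ℂ} {M : ℝ}

lemma norm_mul_crossTerms_le (hM : 0 ≤ M) (hC : ∀ k, ‖C k‖ ≤ M * invAbs k) {N : ℤ} (hN : N ≠ 0)
    (m k : ℤ) :
    ‖C m * C k * C (m + k) * (((m + N : ℤ) : ℂ)⁻¹ * ((m + k + N : ℤ) : ℂ)⁻¹
      - (m : ℂ)⁻¹ * ((m + k + N : ℤ) : ℂ)⁻¹ - ((m + N : ℤ) : ℂ)⁻¹ * ((m + k : ℤ) : ℂ)⁻¹)‖ ≤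
      M ^ 3 * (invAbs N * majorant N (m, k)) := by
  have hx := invAbs_nonneg m
  have hz := invAbs_nonneg k
  have hy := invAbs_nonneg (m + k)
  have htriangle (a b c : ℂ) : ‖a - b - c‖ ≤ ‖a‖ + ‖b‖ + ‖c‖ :=
    (norm_sub_le _ _).trans (by gcongr; exact norm_sub_le _ _)
  rw [norm_mul, norm_mul, norm_mul]
  calc _ ≤ (M * invAbs m) * (M * invAbs k) * (M * invAbs (m + k)) *
        (invAbs (m + N) * invAbs (m + k + N) + invAbs m * invAbs (m + k + N)
          + invAbs (m + N) * invAbs (m + k)) := by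
        gcongr ?_ * ?_ * ?_ * ?_
        · exact hC m
        · exact hC k
        · exact hC (m + k)
        · refine (htriangle _ _ _).trans_eq ?_
          simp only [norm_mul, norm_inv_intCast]
    _ = M ^ 3 * (invAbs m * invAbs k * invAbs (m + k) * (invAbs (m + N) * invAbs (m + k + N)
          + invAbs m * invAbs (m + k + N) + invAbs (m + N) * invAbs (m + k))) := by ring
    _ ≤ M ^ 3 * (invAbs N * majorant N (m, k)) :=
        mul_le_mul_of_nonneg_left (invAbs_mul_crossTerms_le_majorant hN m k) (by positivity)

lemma norm_mul_poleProducts_le (hM : 0 ≤ M) (hC : ∀ k, ‖C k‖ ≤ M * invAbs k) {N : ℤ} (hN : N ≠ 0)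
    (m k : ℤ) :
    ‖C m * C k * C (m + k + N) * (((m : ℂ)⁻¹ * ((m + N : ℤ) : ℂ)⁻¹) *
      (((m + k : ℤ) : ℂ)⁻¹ * ((m + k + N : ℤ) : ℂ)⁻¹))‖ ≤
      M ^ 3 * (invAbs N ^ 3 * majorant N (m, k)) := by
  have hx := invAbs_nonneg m
  have hx' := invAbs_nonneg (m + N)
  have hy := invAbs_nonneg (m + k)
  have hy' := invAbs_nonneg (m + k + N)
  have hz := invAbs_nonneg k
  simp only [norm_mul, norm_inv_intCast]
  calc _ ≤ (M * invAbs m) * (M * invAbs k) * (M * invAbs (m + k + N)) *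
        (invAbs m * invAbs (m + N) * (invAbs (m + k) * invAbs (m + k + N))) := by
        gcongr <;> apply hC
    _ = M ^ 3 * (invAbs m * invAbs k * invAbs (m + k + N) *
          (invAbs m * invAbs (m + N) * (invAbs (m + k) * invAbs (m + k + N)))) := by ring
    _ ≤ M ^ 3 * (invAbs N ^ 3 * majorant N (m, k)) :=
        mul_le_mul_of_nonneg_left (invAbs_mul_poleProducts_le_majorant hN m k) (by positivity)

lemma norm_a2Term_sub_leadingTerm_le (hM : 0 ≤ M) (hC : ∀ k, ‖C k‖ ≤ M * invAbs k) {n : ℕ}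
    (hn : n ≠ 0) (v : ℤ × ℤ) :
    ‖a2Term C n v - ((2 * n : ℤ) : ℂ)⁻¹ ^ 2 * leadingTerm C v‖ ≤
      2 * M ^ 3 * invAbs (2 * n) ^ 3 * majorant (2 * n) v := by
  obtain ⟨m, k⟩ := v
  have he := invAbs_nonneg (2 * n)
  by_cases h : m ≠ 0 ∧ m ≠ -(2 * n) ∧ m + k ≠ 0 ∧ m + k ≠ -(2 * n)
  · have hN : (2 * n : ℤ) ≠ 0 := by lia
    rw [a2Term_sub_leadingTerm_eq C hn h]
    calc _ ≤ invAbs (2 * n) ^ 2 * (M ^ 3 * (invAbs (2 * n) * majorant (2 * n) (m, k)))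
          + M ^ 3 * (invAbs (2 * n) ^ 3 * majorant (2 * n) (m, k)) := by
          refine (norm_sub_le _ _).trans (add_le_add ?_ (norm_mul_poleProducts_le hM hC hN m k))
          rw [norm_mul, norm_pow, norm_inv_intCast]
          gcongr
          exact norm_mul_crossTerms_le hM hC hN m k
      _ = 2 * M ^ 3 * invAbs (2 * n) ^ 3 * majorant (2 * n) (m, k) := by ring
  · have ha : a2Term C n (m, k) = 0 := if_neg h
    have hres : m = 0 ∨ m = -(2 * n) ∨ m + k = 0 ∨ m + k = -(2 * n) := by lia
    have hmaj := majorant_nonneg (2 * n) (m, k)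
    rw [ha, zero_sub, norm_neg, norm_mul, norm_pow, norm_inv_intCast]
    calc invAbs (2 * n) ^ 2 * ‖leadingTerm C (m, k)‖
        ≤ invAbs (2 * n) ^ 2 * (M ^ 3 * (invAbs (2 * n) * majorant (2 * n) (m, k))) := by
          gcongr
          exact (norm_leadingTerm_le hM hC m k).trans
            (mul_le_mul_of_nonneg_left (invAbs_sq_mul_le_majorant_of_resonant hres) (by positivity))
      _ = 1 * M ^ 3 * invAbs (2 * n) ^ 3 * majorant (2 * n) (m, k) := by ring
      _ ≤ 2 * M ^ 3 * invAbs (2 * n) ^ 3 * majorant (2 * n) (m, k) := by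
          gcongr
          exact one_le_two

lemma tsum_a2Term_eq_tsum_sub (hM : 0 ≤ M) (hC : ∀ k, ‖C k‖ ≤ M * invAbs k)
    (heven : Function.Even C) {n : ℕ} (hn : n ≠ 0) :
    ∑' v, a2Term C n v =
      ∑' v, (a2Term C n v - ((2 * n : ℤ) : ℂ)⁻¹ ^ 2 * leadingTerm C v) := by
  have hlead := (summable_leadingTerm hM hC).mul_left (((2 * n : ℤ) : ℂ)⁻¹ ^ 2)
  have hdiff := Summable.of_norm_bounded ((hasSum_majorant (2 * n)).summable.mul_left _)
    (norm_a2Term_sub_leadingTerm_le hM hC hn)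
  have hsum : Summable (a2Term C n) := by simpa using hdiff.add hlead
  rw [hsum.tsum_sub hlead, tsum_mul_left, tsum_leadingTerm hM hC heven, mul_zero, sub_zero]

lemma norm_tsum_a2Term_le (hM : 0 ≤ M) (hC : ∀ k, ‖C k‖ ≤ M * invAbs k)
    (heven : Function.Even C) {n : ℕ} (hn : n ≠ 0) :
    ‖∑' v, a2Term C n v‖ ≤ 10 * M ^ 3 * (∑' k, invAbs k ^ 2) ^ 2 * (1 / (n : ℝ) ^ 3) := by
  have he := invAbs_nonneg (2 * n)
  rw [tsum_a2Term_eq_tsum_sub hM hC heven hn]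
  calc _ ≤ 2 * M ^ 3 * invAbs (2 * n) ^ 3 * ∑' v, majorant (2 * n) v :=
        tsum_of_norm_bounded ((hasSum_majorant _).summable.hasSum.mul_left _)
          (norm_a2Term_sub_leadingTerm_le hM hC hn)
    _ ≤ 2 * M ^ 3 * invAbs (2 * n) ^ 3 * (40 * (∑' k, invAbs k ^ 2) ^ 2) := by
        gcongr
        exact tsum_majorant_le _
    _ = 10 * M ^ 3 * (∑' k, invAbs k ^ 2) ^ 2 * (1 / (n : ℝ) ^ 3) := by
        rw [invAbs, Int.cast_mul, abs_mul]
        simp only [Int.cast_ofNat, Nat.abs_ofNat, Int.cast_natCast, Nat.abs_cast]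
        field_simp
        ring

end SecondOrderTerm

theorem stmt15_general {C : ℤ → ℂ} (heven : Function.Even C) (hC0 : C 0 = 0)
    (hC : (fun n : ℕ => C n) =O[atTop] fun n : ℕ => (1 : ℝ) / n) :
    (fun n : ℕ => ∑' v, a2Term C n v) =O[atTop] fun n : ℕ => 1 / (n : ℝ) ^ 3 := by
  obtain ⟨M, hM, hbound⟩ := exists_norm_le_mul_invAbs heven hC0 hC
  refine IsBigO.of_bound (10 * M ^ 3 * (∑' k, invAbs k ^ 2) ^ 2) ?_
  filter_upwards [eventually_ne_atTop 0] with n hn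
  rw [Real.norm_of_nonneg (by positivity : 0 ≤ 1 / (n : ℝ) ^ 3)]
  exact norm_tsum_a2Term_le hM hbound heven hn

lemma even_cosCoef (q : ℝ → ℂ) : Function.Even (cosCoef q) := fun k => by
  simp only [cosCoef, Int.cast_neg, neg_mul, Real.cos_neg]

/-- If `q` belongs to the class `E` (i.e. `C_n = O(1/n)` and `C₀ = 0`),
then `a₂(n²) = O(1/n³)` as `n → ∞`. -/
theorem stmt15 (q : ℝ → ℂ)
    (hint : IntervalIntegrable q volume 0 Real.pi)
    (hC0 : cosCoef q 0 = 0)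
    (hE : (fun n : ℕ => cosCoef q (n : ℤ)) =O[atTop] fun n : ℕ => (1 : ℝ) / n) :
    (fun n : ℕ => a2sum q n) =O[atTop] fun n : ℕ => 1 / (n : ℝ)^3 :=
  stmt15_general (even_cosCoef q) hC0 hE
end
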